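/- Let f be a multicritical circle map with irrational rotation number and chosen critical point c_0, and let 0 ≤ k < a_{n+1} be such that the interval f^{q_n + k q_{n+1}}(I_{n+1}(c_0)) ⊂ I_n(c_0) contains a critical point of f^{q_{n+1}}. Then the length of f^{q_n + k q_{n+1}}(I_{n+1}(c_0)) is comparable to the length of I_n(c_0): there is a constant K > 1 depending only on f such that K^{−1}|I_n(c_0)| ≤ |f^{q_n + k q_{n+1}}(I_{n+1}(c_0))| ≤ K|I_n(c_0)|. -/

import Mathlib

open Set Filter MeasureTheory

noncomputable section

/-- The Schwarzian derivative `Sf = (f''/f')' - (1/2) (f''/f')^2`. -/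
def schwarzianDeriv (f : ℝ → ℝ) (x : ℝ) : ℝ :=
  deriv (fun y => deriv (deriv f) y / deriv f y) x
    - (1 / 2) * (deriv (deriv f) x / deriv f x) ^ 2

/-- A multicritical circle map, described through its lift `F : ℝ → ℝ` to the real line.
It is an orientation-preserving `C^3` circle homeomorphism with finitely many critical
points `c 0, …, c (N-1)`, each of non-flat power-law type: near `c i` the derivative is
pinched between two multiples of `|x - c i| ^ (s i - 1)` with `s i > 1`, the Schwarzian
derivative is negative on a punctured neighborhood of each critical point, and
`log (F')` has bounded variation (bounded by `v`) off the critical neighborhoods. -/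
structure MCM where
  /-- the lift of the circle map -/
  F : ℝ → ℝ
  smooth : ContDiff ℝ 3 F
  mono : StrictMono F
  deg1 : ∀ x, F (x + 1) = F x + 1
  /-- number of critical points -/
  N : ℕ
  N_pos : 0 < N
  /-- the critical points (one representative in `[0,1)` for each) -/
  c : Fin N → ℝ
  c_mem : ∀ i, c i ∈ Set.Ico (0 : ℝ) 1
  c_inj : Function.Injective c
  isCrit : ∀ i, deriv F (c i) = 0
  critOnly : ∀ x, deriv F x = 0 → ∃ (i : Fin N) (k : ℤ), x = c i + (k : ℝ)
  /-- neighborhoods of the critical points -/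
  W : Fin N → Set ℝ
  W_open : ∀ i, IsOpen (W i)
  c_mem_W : ∀ i, c i ∈ W i
  /-- the criticalities (power-law exponents) -/
  s : Fin N → ℝ
  s_gt_one : ∀ i, 1 < s i
  al : Fin N → ℝ
  be : Fin N → ℝ
  al_pos : ∀ i, 0 < al i
  al_lt_be : ∀ i, al i < be i
  powerLaw : ∀ i, ∀ x ∈ W i, x ≠ c i →
    al i * |x - c i| ^ (s i - 1) < deriv F x ∧
      deriv F x < be i * |x - c i| ^ (s i - 1)
  negSchwarzian : ∀ i, ∀ x ∈ W i, x ≠ c i → schwarzianDeriv F x < 0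
  /-- bound for the variation of `log DF` off the critical neighborhoods -/
  v : ℝ
  v_pos : 0 < v
  logDF_var : eVariationOn (fun x => Real.log (deriv F x))
      (Set.Icc 0 1 \ ⋃ (i) (k : ℤ), (fun y => y + (k : ℝ)) '' W i) ≤ ENNReal.ofReal v

/-- The circle map with lift `F` has rotation number `ρ`. -/
def HasRotationNumber (F : ℝ → ℝ) (ρ : ℝ) : Prop :=
  Tendsto (fun n : ℕ => F^[n] 0 / n) atTop (nhds ρ)

/-- The Gauss map `x ↦ {1/x}`. -/
def gaussMap (x : ℝ) : ℝ := Int.fract x⁻¹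

/-- Partial quotients `a_n` of the continued fraction expansion of `ρ ∈ (0,1)`. -/
def cfDigit (ρ : ℝ) (n : ℕ) : ℕ := (⌊(gaussMap^[n] ρ)⁻¹⌋).toNat

/-- Return times: the denominators `q_n` of the convergents of `ρ`,
`q_0 = 1`, `q_1 = a_0`, `q_{n+1} = a_n q_n + q_{n-1}`. -/
def qDen (ρ : ℝ) : ℕ → ℕ
  | 0 => 1
  | 1 => cfDigit ρ 0
  | n + 2 => cfDigit ρ (n + 1) * qDen ρ (n + 1) + qDen ρ n

/-- Numerators `p_n` of the convergents of `ρ`: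
`p_0 = 0`, `p_1 = 1`, `p_{n+1} = a_n p_n + p_{n-1}`. -/
def pNum (ρ : ℝ) : ℕ → ℕ
  | 0 => 0
  | 1 => 1
  | n + 2 => cfDigit ρ (n + 1) * pNum ρ (n + 1) + pNum ρ n

/-- The lift of the atom `I_ℓ^j(x) = f^j(I_ℓ(x))`, where `I_ℓ(x)` is the interval with
endpoints `x` and `f^{q_ℓ}(x)`; the lift of `f^{q_ℓ}(x)` adjacent to `x` is
`F^[q_ℓ] x - p_ℓ`. -/
def atomSet (F : ℝ → ℝ) (ρ x : ℝ) (ℓ j : ℕ) : Set ℝ :=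
  Set.uIcc (F^[j] x) (F^[j + qDen ρ ℓ] x - (pNum ρ ℓ : ℝ))

/-- The length of the atom `I_ℓ^j(x)`. -/
def atomLen (F : ℝ → ℝ) (ρ x : ℝ) (ℓ j : ℕ) : ℝ :=
  |F^[j + qDen ρ ℓ] x - (pNum ρ ℓ : ℝ) - F^[j] x|

/-- The two endpoints (as lifts) of the atom `I_ℓ^j(x)`. -/
def atomEnds (F : ℝ → ℝ) (ρ x : ℝ) (ℓ j : ℕ) : Set ℝ :=
  {F^[j] x, F^[j + qDen ρ ℓ] x - (pNum ρ ℓ : ℝ)}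

/-- `(ℓ, j)` indexes an atom of the `n`-th dynamical partition
`P_n(x) = {I_n^i(x) : i < q_{n+1}} ∪ {I_{n+1}^j(x) : j < q_n}`. -/
def IsAtomIdx (ρ : ℝ) (n ℓ j : ℕ) : Prop :=
  (ℓ = n ∧ j < qDen ρ (n + 1)) ∨ (ℓ = n + 1 ∧ j < qDen ρ n)

/-- Two distinct atoms are adjacent when they share an endpoint on the circle,
i.e. when some endpoints of their lifts differ by an integer. -/
def AdjacentAtoms (F : ℝ → ℝ) (ρ x : ℝ) (ℓ₁ j₁ ℓ₂ j₂ : ℕ) : Prop :=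
  (ℓ₁, j₁) ≠ (ℓ₂, j₂) ∧
    ∃ u ∈ atomEnds F ρ x ℓ₁ j₁, ∃ w ∈ atomEnds F ρ x ℓ₂ j₂, ∃ k : ℤ, w = u + (k : ℝ)



/-- cross-ratio distortion inequality -/
def CRle (C a b c d a' b' c' d' : ℝ) : Prop :=
  |b' - a'| * |d' - c'| * (|c - a| * |d - b|) ≤ C * (|b - a| * |d - c| * (|c' - a'| * |d' - b'|))

lemma CRle_of_lt {C a b c d a' b' c' d' : ℝ} (h1 : a < b) (h2 : b < c) (h3 : c < d)
    (h1' : a' < b') (h2' : b' < c') (h3' : c' < d') :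
    CRle C a b c d a' b' c' d' ↔
    (b' - a') * (d' - c') * ((c - a) * (d - b)) ≤
      C * ((b - a) * (d - c) * ((c' - a') * (d' - b'))) := by
  unfold CRle
  rw [abs_of_pos (by linarith : 0 < b' - a'), abs_of_pos (by linarith : 0 < d' - c'),
    abs_of_pos (by linarith : 0 < c - a), abs_of_pos (by linarith : 0 < d - b),
    abs_of_pos (by linarith : 0 < b - a), abs_of_pos (by linarith : 0 < d - c),
    abs_of_pos (by linarith : 0 < c' - a'), abs_of_pos (by linarith : 0 < d' - b')]

lemma contDiff2_deriv {G : ℝ → ℝ} (hG : ContDiff ℝ 3 G) : ContDiff ℝ 2 (deriv G) := by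
  have e : (3 : WithTop ℕ∞) = 2 + 1 := by norm_num
  rw [e] at hG
  exact (contDiff_succ_iff_deriv.1 hG).2.2

lemma contDiff1_deriv2 {G : ℝ → ℝ} (hG : ContDiff ℝ 3 G) :
    ContDiff ℝ 1 (deriv (deriv G)) := by
  have h := contDiff2_deriv hG
  have e : (2 : WithTop ℕ∞) = 1 + 1 := by norm_num
  rw [e] at h
  exact (contDiff_succ_iff_deriv.1 h).2.2

/-- tangent estimate for negative Schwarzian -/
lemma ns_tangent {G : ℝ → ℝ} (hG : ContDiff ℝ 3 G) {a d : ℝ}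
    (hpos : ∀ x ∈ Icc a d, 0 < deriv G x)
    (hS : ∀ x ∈ Icc a d, schwarzianDeriv G x < 0) {t : ℝ} (ht : t ∈ Icc a d) :
    ∃ μ : ℝ, ∀ y ∈ Icc a d, y ≠ t →
      (1 + μ * (y - t)) * ((G y - G t) / (y - t)) ≤ deriv G t := by
  have hG1 : ContDiff ℝ 2 (deriv G) := contDiff2_deriv hG
  have hG2 : ContDiff ℝ 1 (deriv (deriv G)) := contDiff1_deriv2 hG
  have dG : ∀ x, HasDerivAt G (deriv G x) x := fun x =>
    (hG.differentiable (by norm_num) x).hasDerivAt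
  have dG1 : ∀ x, HasDerivAt (deriv G) (deriv (deriv G) x) x := fun x =>
    (hG1.differentiable (by norm_num) x).hasDerivAt
  have dG2 : ∀ x, DifferentiableAt ℝ (deriv (deriv G)) x := fun x =>
    (hG2.differentiable (by norm_num) x)
  set Nn : ℝ → ℝ := fun y => deriv (deriv G) y / deriv G y with hN
  have dN : ∀ x ∈ Icc a d, HasDerivAt Nn (deriv Nn x) x := fun x hx =>
    ((dG2 x).div (hG1.differentiable (by norm_num) x) (hpos x hx).ne').hasDerivAt
  set ψ : ℝ → ℝ := fun x => Real.exp (-(1/2) * Real.log (deriv G x)) with hψ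
  have dψ : ∀ x ∈ Icc a d, HasDerivAt ψ (-(1/2) * Nn x * ψ x) x := by
    intro x hx
    have := (((dG1 x).log (hpos x hx).ne').const_mul (-(1/2))).exp
    refine this.congr_deriv ?_
    simp only [hψ, hN]; ring
  have dψ' : ∀ x ∈ Icc a d, HasDerivAt (fun x => -(1/2) * Nn x * ψ x)
      (-(1/2) * schwarzianDeriv G x * ψ x) x := by
    intro x hx
    have := ((dN x hx).const_mul (-(1/2))).mul (dψ x hx)
    refine this.congr_deriv ?_
    simp only [schwarzianDeriv, hN]; ring
  have ψpos : ∀ x, 0 < ψ x := fun x => Real.exp_pos _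
  have ψsq : ∀ x ∈ Icc a d, ψ x * ψ x * deriv G x = 1 := by
    intro x hx
    have h1 : deriv G x = Real.exp (Real.log (deriv G x)) := (Real.exp_log (hpos x hx)).symm
    simp only [hψ]
    rw [← Real.exp_add]
    nth_rewrite 3 [h1]
    rw [← Real.exp_add]
    rw [Real.exp_eq_one_iff]; ring
  have hmono : MonotoneOn (fun x => -(1/2) * Nn x * ψ x) (Icc a d) := by
    apply monotoneOn_of_deriv_nonneg (convex_Icc a d)
    · intro x hx; exact (dψ' x hx).continuousAt.continuousWithinAt
    · intro x hx; exact (dψ' x (interior_subset hx)).differentiableAt.differentiableWithinAt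
    · intro x hx
      rw [(dψ' x (interior_subset hx)).deriv]
      have := hS x (interior_subset hx)
      have := ψpos x
      nlinarith [mul_pos (neg_pos.2 (hS x (interior_subset hx))) this]
  set p := ψ t with hp
  have pp : 0 < p := ψpos t
  set m := -(1/2) * Nn t * ψ t with hm
  have line : ∀ y ∈ Icc a d, p + m * (y - t) ≤ ψ y := by
    intro y hy
    rcases lt_trichotomy y t with h | h | h
    · obtain ⟨ξ, hξ, e⟩ := exists_hasDerivAt_eq_slope ψ (fun x => -(1/2) * Nn x * ψ x) h
        (fun x hx => (dψ x ⟨hy.1.trans hx.1, hx.2.trans ht.2⟩).continuousAt.continuousWithinAt)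
        (fun x hx => dψ x ⟨hy.1.trans hx.1.le, hx.2.le.trans ht.2⟩)
      have h1 := hmono ⟨hy.1.trans hξ.1.le, hξ.2.le.trans ht.2⟩ ht hξ.2.le
      simp only at h1 e
      rw [e, div_le_iff₀ (by linarith)] at h1
      simp only [hm, hp]; linarith
    · subst h; simp [hp]
    · obtain ⟨ξ, hξ, e⟩ := exists_hasDerivAt_eq_slope ψ (fun x => -(1/2) * Nn x * ψ x) h
        (fun x hx => (dψ x ⟨ht.1.trans hx.1, hx.2.trans hy.2⟩).continuousAt.continuousWithinAt)
        (fun x hx => dψ x ⟨ht.1.trans hx.1.le, hx.2.le.trans hy.2⟩)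
      have h1 := hmono ht ⟨ht.1.trans hξ.1.le, hξ.2.le.trans hy.2⟩ hξ.1.le
      simp only at h1 e
      rw [e, le_div_iff₀ (by linarith)] at h1
      simp only [hm, hp]; linarith
  have Gmono : StrictMonoOn G (Icc a d) := by
    apply strictMonoOn_of_deriv_pos (convex_Icc a d)
    · exact hG.continuous.continuousOn
    · intro x hx; exact hpos x (interior_subset hx)
  refine ⟨m / p, fun y hy hyt => ?_⟩
  have hslope : 0 < (G y - G t) / (y - t) := by
    rcases lt_or_gt_of_ne hyt with h | h
    · exact div_pos_of_neg_of_neg (by linarith [Gmono hy ht h]) (by linarith)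
    · exact div_pos (by linarith [Gmono ht hy h]) (by linarith)
  by_cases hl : p + m * (y - t) ≤ 0
  · have : 1 + m / p * (y - t) ≤ 0 := by
      have : 1 + m / p * (y - t) = (p + m * (y - t)) / p := by field_simp
      rw [this]; exact div_nonpos_of_nonpos_of_nonneg hl pp.le
    exact (mul_nonpos_of_nonpos_of_nonneg this hslope.le).trans (hpos t ht).le
  push Not at hl
  have linpos : ∀ x ∈ uIcc t y, 0 < p + m * (x - t) := by
    intro x hx
    rcases le_total t y with h | h
    · rw [uIcc_of_le h] at hx
      rcases le_total 0 m with h' | h'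
      · have := mul_nonneg h' (sub_nonneg.2 hx.1); linarith
      · have : m * (y - t) ≤ m * (x - t) := mul_le_mul_of_nonpos_left (by linarith [hx.2]) h'
        linarith
    · rw [uIcc_of_ge h] at hx
      rcases le_total 0 m with h' | h'
      · have : m * (y - t) ≤ m * (x - t) := mul_le_mul_of_nonneg_left (by linarith [hx.1]) h'
        linarith
      · have := mul_nonneg_of_nonpos_of_nonpos h' (sub_nonpos.2 hx.2); linarith
  have sub : uIcc t y ⊆ Icc a d := by
    have : OrdConnected (Icc a d) := ordConnected_Icc
    exact this.uIcc_subset ht hy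
  set Kk : ℝ → ℝ := fun x => (x - t) / (p * (p + m * (x - t))) with hK
  have dK : ∀ x ∈ uIcc t y, HasDerivAt Kk (1 / (p + m * (x - t)) ^ 2) x := by
    intro x hx
    have h1 : HasDerivAt (fun x : ℝ => x - t) 1 x := (hasDerivAt_id x).sub_const t
    have h2 := ((h1.const_mul m).const_add p).const_mul p
    have h0 := linpos x hx
    have := h1.div h2 (by positivity)
    refine this.congr_deriv ?_
    field_simp
    ring
  have anti : AntitoneOn (fun x => G x - Kk x) (uIcc t y) := by
    apply antitoneOn_of_deriv_nonpos (convex_uIcc t y)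
    · intro x hx; exact ((dG x).sub (dK x hx)).continuousAt.continuousWithinAt
    · intro x hx
      exact ((dG x).sub (dK x (interior_subset hx))).differentiableAt.differentiableWithinAt
    · intro x hx
      have hx := interior_subset hx
      have e : deriv (fun x => G x - Kk x) x = _ := ((dG x).sub (dK x hx)).deriv
      rw [e]
      have h0 := linpos x hx
      have h1 := line x (sub hx)
      have h2 := ψsq x (sub hx)
      have h3 := hpos x (sub hx)
      rw [sub_nonpos, le_div_iff₀ (by positivity)]
      have : (p + m * (x - t)) ^ 2 ≤ ψ x * ψ x := by nlinarith
      nlinarith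
  have key : (G y - G t) / (y - t) ≤ 1 / (p * (p + m * (y - t))) := by
    have Kt : Kk t = 0 := by simp [hK]
    have Ky : Kk y = (1 / (p * (p + m * (y - t)))) * (y - t) := by simp only [hK]; ring
    rcases lt_or_gt_of_ne hyt with h | h
    · have := anti right_mem_uIcc left_mem_uIcc h.le
      simp only [Kt, Ky] at this
      rw [div_le_iff_of_neg (by linarith)]
      linarith
    · have := anti left_mem_uIcc right_mem_uIcc h.le
      simp only [Kt, Ky] at this
      rw [div_le_iff₀ (by linarith)]
      linarith
  have e1 : deriv G t = 1 / (p * p) := by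
    rw [eq_div_iff (by positivity)]; have := ψsq t ht; linarith
  have e2 : 1 + m / p * (y - t) = (p + m * (y - t)) / p := by field_simp
  rw [e1, e2]
  calc _ ≤ (p + m * (y - t)) / p * (1 / (p * (p + m * (y - t)))) :=
        mul_le_mul_of_nonneg_left key (by positivity)
    _ = _ := by field_simp

/-- negative Schwarzian contracts the cross ratio -/
lemma ns_CR {G : ℝ → ℝ} (hG : ContDiff ℝ 3 G) {a b c d : ℝ}
    (hpos : ∀ x ∈ Icc a d, 0 < deriv G x)
    (hS : ∀ x ∈ Icc a d, schwarzianDeriv G x < 0)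
    (hab : a < b) (hbc : b < c) (hcd : c < d) :
    CRle 1 a b c d (G a) (G b) (G c) (G d) := by
  have dG : ∀ x, HasDerivAt G (deriv G x) x := fun x =>
    (hG.differentiable (by norm_num) x).hasDerivAt
  have Gmono : StrictMonoOn G (Icc a d) := by
    apply strictMonoOn_of_deriv_pos (convex_Icc a d)
    · exact hG.continuous.continuousOn
    · intro x hx; exact hpos x (interior_subset hx)
  have ha : a ∈ Icc a d := ⟨le_rfl, by linarith⟩
  have hb : b ∈ Icc a d := ⟨by linarith, by linarith⟩
  have hc : c ∈ Icc a d := ⟨by linarith, by linarith⟩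
  have hd : d ∈ Icc a d := ⟨by linarith, le_rfl⟩
  have main : ∀ t ∈ Ioo a d, (d - a) * ((G t - G a) * (G d - G t)) ≤
      deriv G t * (G d - G a) * ((t - a) * (d - t)) := by
    intro t ht
    obtain ⟨μ, hμ⟩ := ns_tangent hG hpos hS ⟨ht.1.le, ht.2.le⟩
    have h1 := hμ a ha ht.1.ne
    have h2 := hμ d hd ht.2.ne'
    set A := G t - G a
    set B := G d - G t
    have hA : 0 < A := sub_pos.2 (Gmono ha ⟨ht.1.le, ht.2.le⟩ ht.1)
    have hB : 0 < B := sub_pos.2 (Gmono ⟨ht.1.le, ht.2.le⟩ hd ht.2)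
    have l : 0 < t - a := by linarith [ht.1]
    have r : 0 < d - t := by linarith [ht.2]
    have e1 : (G a - G t) / (a - t) = A / (t - a) := by
      rw [← neg_div_neg_eq]; simp [A]
    rw [e1] at h1
    rw [← mul_div_assoc, div_le_iff₀ l] at h1
    rw [← mul_div_assoc, div_le_iff₀ r] at h2
    have e3 : G d - G a = A + B := by simp only [A, B]; ring
    rw [e3]
    have h1' := mul_le_mul_of_nonneg_right h1 (mul_pos r hB).le
    have h2' := mul_le_mul_of_nonneg_right h2 (mul_pos l hA).le
    nlinarith
  rw [CRle_of_lt hab hbc hcd (Gmono ha hb hab) (Gmono hb hc hbc) (Gmono hc hd hcd), one_mul]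
  set R : ℝ → ℝ := fun t => ((G d - G t) * (t - a)) / ((G t - G a) * (d - t)) with hR
  have pos1 : ∀ t ∈ Icc b c, 0 < G t - G a ∧ 0 < G d - G t ∧ 0 < t - a ∧ 0 < d - t := by
    intro t ht
    have h1 : a < t := by linarith [ht.1]
    have h2 : t < d := by linarith [ht.2]
    exact ⟨sub_pos.2 (Gmono ha ⟨h1.le, h2.le⟩ h1), sub_pos.2 (Gmono ⟨h1.le, h2.le⟩ hd h2),
      sub_pos.2 h1, sub_pos.2 h2⟩
  have dR : ∀ t ∈ Icc b c, HasDerivAt R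
      (((d - a) * ((G t - G a) * (G d - G t)) - deriv G t * (G d - G a) * ((t - a) * (d - t))) /
        ((G t - G a) * (d - t)) ^ 2) t := by
    intro t ht
    obtain ⟨p1, p2, p3, p4⟩ := pos1 t ht
    have h1 := (((dG t).const_sub (G d)).mul ((hasDerivAt_id t).sub_const a))
    have h2 := (((dG t).sub_const (G a)).mul ((hasDerivAt_id t).const_sub d))
    have := h1.div h2 (by simp only [Pi.mul_apply, id]; positivity)
    refine this.congr_deriv ?_
    simp only [Pi.mul_apply, id]
    congr 1
    ring
  have anti : AntitoneOn R (Icc b c) := by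
    apply antitoneOn_of_deriv_nonpos (convex_Icc b c)
    · intro x hx; exact (dR x hx).continuousAt.continuousWithinAt
    · intro x hx
      exact (dR x (interior_subset hx)).differentiableAt.differentiableWithinAt
    · intro x hx
      have hx := interior_subset hx
      rw [(dR x hx).deriv]
      apply div_nonpos_of_nonpos_of_nonneg _ (by positivity)
      linarith [main x ⟨by linarith [hx.1], by linarith [hx.2]⟩]
  have fin := anti ⟨le_rfl, hbc.le⟩ ⟨hbc.le, le_rfl⟩ hbc.le
  simp only [hR] at fin
  obtain ⟨p1, p2, p3, p4⟩ := pos1 b ⟨le_rfl, hbc.le⟩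
  obtain ⟨r1, r2, r3, r4⟩ := pos1 c ⟨hbc.le, le_rfl⟩
  rw [div_le_div_iff₀ (by positivity) (by positivity)] at fin
  nlinarith


lemma CRle.mono {C C' a b c d a' b' c' d' : ℝ} (h : CRle C a b c d a' b' c' d') (hC : C ≤ C') :
    CRle C' a b c d a' b' c' d' := by
  unfold CRle at *
  exact h.trans (mul_le_mul_of_nonneg_right hC (by positivity))

lemma pow_upper {G G' : ℝ → ℝ} {be e x y u v : ℝ} (he : 0 < e) (hbe : 0 < be)
    (hd : ∀ t, HasDerivAt G (G' t) t) (hb : ∀ t ∈ Icc x y, G' t ≤ be * |t| ^ e)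
    (hxu : x ≤ u) (huv : u < v) (hvy : v ≤ y) :
    G v - G u ≤ be * (max |x| |y|) ^ e * (v - u) := by
  obtain ⟨ξ, hξ, h⟩ := exists_hasDerivAt_eq_slope G G' huv
    (fun t _ => (hd t).continuousAt.continuousWithinAt) (fun t _ => hd t)
  have hξ' : ξ ∈ Icc x y := ⟨hxu.trans hξ.1.le, hξ.2.le.trans hvy⟩
  rw [eq_div_iff (by linarith)] at h
  rw [← h]
  apply mul_le_mul_of_nonneg_right _ (by linarith)
  refine (hb ξ hξ').trans (mul_le_mul_of_nonneg_left ?_ hbe.le)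
  exact Real.rpow_le_rpow (abs_nonneg _) (abs_le_max_abs_abs hξ'.1 hξ'.2) he.le

lemma pow_lower_aux {G G' : ℝ → ℝ} {al e x y : ℝ} (he : 0 < e) (hal : 0 < al)
    (hd : ∀ t, HasDerivAt G (G' t) t) (hpos : ∀ t, 0 ≤ G' t)
    (hb : ∀ t ∈ Icc x y, al * |t| ^ e ≤ G' t) (hxy : x < y) (hM : |x| ≤ y) :
    al * (y / 2) ^ e * ((y - x) / 4) ≤ G y - G x := by
  have hGm : Monotone G := monotone_of_deriv_nonneg (fun t => (hd t).differentiableAt)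
    (fun t => by rw [(hd t).deriv]; exact hpos t)
  have hx1 := abs_le.1 hM
  have hy : 0 < y := by
    rcases lt_or_ge 0 y with h | h
    · exact h
    · linarith [abs_nonneg x, hx1.1, hx1.2]
  set x' := max x (y / 2) with hx'
  have h1 : x ≤ x' := le_max_left _ _
  have h2 : y / 2 ≤ x' := le_max_right _ _
  have h3 : x' < y := max_lt hxy (by linarith)
  have h4 : (y - x) / 4 ≤ y - x' := by
    rcases max_cases x (y / 2) with ⟨h, _⟩ | ⟨h, _⟩ <;> rw [hx', h] <;> linarith
  obtain ⟨ξ, hξ, h⟩ := exists_hasDerivAt_eq_slope G G' h3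
    (fun t _ => (hd t).continuousAt.continuousWithinAt) (fun t _ => hd t)
  rw [eq_div_iff (by linarith)] at h
  have hξ' : ξ ∈ Icc x y := ⟨h1.trans hξ.1.le, hξ.2.le⟩
  have h5 : al * (y / 2) ^ e ≤ G' ξ := by
    refine le_trans (mul_le_mul_of_nonneg_left ?_ hal.le) (hb ξ hξ')
    refine Real.rpow_le_rpow (by linarith) ?_ he.le
    exact (h2.trans hξ.1.le).trans (le_abs_self _)
  have h6 : 0 ≤ al * (y / 2) ^ e := by positivity
  calc _ ≤ al * (y / 2) ^ e * (y - x') := mul_le_mul_of_nonneg_left h4 h6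
    _ ≤ G' ξ * (y - x') := mul_le_mul_of_nonneg_right h5 (by linarith)
    _ = G y - G x' := h
    _ ≤ _ := by linarith [hGm h1]

lemma pow_lower {G G' : ℝ → ℝ} {al e x y : ℝ} (he : 0 < e) (hal : 0 < al)
    (hd : ∀ t, HasDerivAt G (G' t) t) (hpos : ∀ t, 0 ≤ G' t)
    (hb : ∀ t ∈ Icc x y, al * |t| ^ e ≤ G' t) (hxy : x < y) :
    al * ((max |x| |y|) / 2) ^ e * ((y - x) / 4) ≤ G y - G x := by
  rcases le_total |x| |y| with h | h
  · rw [max_eq_right h]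
    have hy : |y| = y := by
      rcases abs_choice y with h' | h'
      · exact h'
      · have := abs_nonneg y
        have : |x| = -x := abs_of_neg (by linarith)
        linarith
    rw [hy] at h ⊢
    exact pow_lower_aux he hal hd hpos hb hxy h
  · rw [max_eq_left h]
    have hx : |x| = -x := by
      rcases abs_choice x with h' | h'
      · have := abs_nonneg x
        have : |y| = y := abs_of_pos (by linarith)
        linarith
      · exact h'
    rw [hx] at h ⊢
    have := pow_lower_aux (G := fun t => - G (-t)) (G' := fun t => G' (-t)) (x := -y) (y := -x)
      he hal (fun t => by
        have := ((hd (-t)).comp t (hasDerivAt_neg t)).neg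
        exact this.congr_deriv (by simp)) (fun t => hpos _)
      (fun t ht => by
        have := hb (-t) ⟨by linarith [ht.2], by linarith [ht.1]⟩
        simpa using this) (by linarith) (by simpa using h)
    simp only [neg_neg] at this
    have e2 : -x - -y = y - x := by ring
    rw [e2] at this
    linarith

namespace MCM
variable (f : MCM)

/-- as a Mathlib degree one lift -/
def lift1 : CircleDeg1Lift := ⟨⟨f.F, f.mono.monotone⟩, f.deg1⟩

lemma map_add_int (x : ℝ) (k : ℤ) : f.F (x + k) = f.F x + k := f.lift1.map_add_int x k

lemma dF (x : ℝ) : HasDerivAt f.F (deriv f.F x) x :=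
  (f.smooth.differentiable (by norm_num) x).hasDerivAt

lemma deriv_add_int (x : ℝ) (k : ℤ) : deriv f.F (x + k) = deriv f.F x := by
  have h : (fun x => f.F (x + k)) = fun x => f.F x + k := by
    funext x; exact f.map_add_int x k
  rw [← deriv_comp_add_const, h, deriv_add_const]

lemma deriv2_add_int (x : ℝ) (k : ℤ) : deriv (deriv f.F) (x + k) = deriv (deriv f.F) x := by
  have h : (fun x => deriv f.F (x + k)) = fun x => deriv f.F x := by
    funext x; exact f.deriv_add_int x k
  rw [← deriv_comp_add_const, h]

lemma deriv_nonneg (x : ℝ) : 0 ≤ deriv f.F x := f.mono.monotone.deriv_nonneg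

lemma cont_deriv : Continuous (deriv f.F) := (contDiff2_deriv f.smooth).continuous
lemma cont_deriv2 : Continuous (deriv (deriv f.F)) := (contDiff1_deriv2 f.smooth).continuous

end MCM

lemma periodic_bound {g : ℝ → ℝ} (hc : Continuous g) (hp : ∀ (x : ℝ) (k : ℤ), g (x + k) = g x) :
    ∃ B > 0, ∀ x, |g x| ≤ B := by
  obtain ⟨B, hB⟩ := isCompact_Icc.exists_bound_of_continuousOn (s := Icc (0 : ℝ) 1) hc.continuousOn
  refine ⟨max B 1, by positivity, fun x => ?_⟩
  have h1 : g x = g (Int.fract x) := by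
    have := hp (Int.fract x) ⌊x⌋
    rw [Int.fract_add_floor] at this; exact this
  rw [h1]
  exact (hB _ ⟨Int.fract_nonneg x, (Int.fract_lt_one x).le⟩).trans (le_max_left _ _)

namespace MCM
variable (f : MCM)

lemma localData : ∃ δ η : ℝ, 0 < δ ∧ δ < 1 ∧ 0 < η ∧
    (∀ i t, |t| < 3 * δ → t + f.c i ∈ f.W i) ∧
    (∀ x, (∀ i (k : ℤ), δ ≤ |x - f.c i - k|) → η ≤ deriv f.F x) := by
  have h1 : ∀ i, ∃ ε > 0, Metric.ball (f.c i) ε ⊆ f.W i := fun i =>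
    Metric.isOpen_iff.1 (f.W_open i) _ (f.c_mem_W i)
  choose ε hε hW using h1
  haveI : Nonempty (Fin f.N) := ⟨⟨0, f.N_pos⟩⟩
  obtain ⟨i₁, hi₁⟩ := Finite.exists_min ε
  set δ := min (ε i₁ / 3) (1 / 2) with hδ
  have δpos : 0 < δ := lt_min (by linarith [hε i₁]) (by norm_num)
  set S : Set ℝ := Icc 0 1 ∩ {x | ∀ i (k : ℤ), δ ≤ |x - f.c i - k|} with hS
  have Sc : IsCompact S := by
    apply isCompact_Icc.inter_right
    simp only [Set.ofPred_forall]
    exact isClosed_iInter fun i => isClosed_iInter fun k =>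
      isClosed_le continuous_const (by fun_prop)
  have pos : ∀ x ∈ S, 0 < deriv f.F x := by
    intro x hx
    rcases (f.deriv_nonneg x).lt_or_eq with h | h
    · exact h
    · obtain ⟨i, k, e⟩ := f.critOnly x h.symm
      have := hx.2 i k
      rw [e] at this
      simp at this
      linarith
  obtain ⟨η, hη, hη'⟩ : ∃ η > 0, ∀ x ∈ S, η ≤ deriv f.F x := by
    rcases S.eq_empty_or_nonempty with h | h
    · exact ⟨1, one_pos, fun x hx => by simp [h] at hx⟩
    · obtain ⟨x, hx, hm⟩ := Sc.exists_isMinOn h f.cont_deriv.continuousOn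
      exact ⟨_, pos x hx, fun y hy => hm hy⟩
  refine ⟨δ, η, δpos, (min_le_right _ _).trans_lt (by norm_num), hη, ?_, ?_⟩
  · intro i t ht
    apply hW i
    rw [Metric.mem_ball, Real.dist_eq, add_sub_cancel_right]
    have := min_le_left (ε i₁ / 3) (1 / 2)
    have := hi₁ i
    linarith
  · intro x hx
    have h1 : deriv f.F x = deriv f.F (Int.fract x) := by
      have := f.deriv_add_int (Int.fract x) ⌊x⌋
      rw [Int.fract_add_floor] at this; exact this
    rw [h1]
    apply hη'
    refine ⟨⟨Int.fract_nonneg x, (Int.fract_lt_one x).le⟩, fun i k => ?_⟩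
    have := hx i (k + ⌊x⌋)
    rw [Int.fract]
    push_cast at this
    convert this using 2
    ring

lemma pinch {i : Fin f.N} {t : ℝ} (h : t + f.c i ∈ f.W i) (k : ℤ) :
    f.al i * |t| ^ (f.s i - 1) ≤ deriv f.F (t + (f.c i + k)) ∧
      deriv f.F (t + (f.c i + k)) ≤ f.be i * |t| ^ (f.s i - 1) := by
  rw [← add_assoc, f.deriv_add_int]
  have hs := f.s_gt_one i
  by_cases h0 : t = 0
  · subst h0
    rw [zero_add, f.isCrit i]
    simp [Real.zero_rpow (by linarith : f.s i - 1 ≠ 0)]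
  · have := f.powerLaw i _ h (by simpa using h0)
    rw [add_sub_cancel_right] at this
    exact ⟨this.1.le, this.2.le⟩

lemma dichotomy {δ η : ℝ} 
    (hη : ∀ x, (∀ i (k : ℤ), δ ≤ |x - f.c i - k|) → η ≤ deriv f.F x) {x y : ℝ} (hxy : y - x < δ) :
    (∃ i, ∃ k : ℤ, ∀ t ∈ Icc x y, |t - f.c i - k| < 2 * δ) ∨ ∀ t ∈ Icc x y, η ≤ deriv f.F t := by
  by_cases h : ∀ t ∈ Icc x y, ∀ i (k : ℤ), δ ≤ |t - f.c i - k|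
  · right; exact fun t ht => hη t (h t ht)
  · left
    push Not at h
    obtain ⟨t, ht, i, k, h⟩ := h
    refine ⟨i, k, fun u hu => ?_⟩
    rw [abs_lt] at h ⊢
    constructor <;> linarith [ht.1, ht.2, hu.1, hu.2]

lemma slope_near {δ : ℝ} (hW : ∀ i t, |t| < 3 * δ → t + f.c i ∈ f.W i) (i : Fin f.N) (k : ℤ)
    {x y u v : ℝ} (h : ∀ t ∈ Icc x y, |t - f.c i - k| < 2 * δ) (hxu : x ≤ u) (huv : u < v)
    (hvy : v ≤ y) :
    (f.F v - f.F u) * (y - x) ≤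
      (4 * 2 ^ (f.s i - 1) * (f.be i / f.al i)) * ((f.F y - f.F x) * (v - u)) := by
  have hal := f.al_pos i
  have hbe : 0 < f.be i := hal.trans (f.al_lt_be i)
  have he : 0 < f.s i - 1 := by linarith [f.s_gt_one i]
  set e := f.s i - 1
  set z := f.c i + (k : ℝ) with hz
  have hb : ∀ t ∈ Icc (x - z) (y - z), t + f.c i ∈ f.W i := by
    intro t ht
    apply hW
    have := h (t + z) ⟨by linarith [ht.1], by linarith [ht.2]⟩
    have e1 : t + z - f.c i - k = t := by rw [hz]; ring
    rw [e1] at this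
    linarith [abs_nonneg t]
  have hd : ∀ t, HasDerivAt (fun t => f.F (t + z)) (deriv f.F (t + z)) t := fun t =>
    (f.dF (t + z)).comp_add_const t z
  have up := pow_upper (u := u - z) (v := v - z) he hbe hd
    (fun t ht => (f.pinch (hb t ht) k).2) (by linarith) (by linarith) (by linarith)
  have lo := pow_lower he hal hd (fun t => f.deriv_nonneg _)
    (fun t ht => (f.pinch (hb t ht) k).1) (by linarith)
  simp only [sub_add_cancel, sub_sub_sub_cancel_right] at up lo
  set M := max |x - z| |y - z|
  have hM : 0 ≤ M := le_max_of_le_left (abs_nonneg _)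
  rw [Real.div_rpow hM (by norm_num)] at lo
  have h2 : (0 : ℝ) < 2 ^ e := by positivity
  have hvu : 0 < v - u := by linarith
  have hyx : 0 < y - x := by linarith
  calc (f.F v - f.F u) * (y - x) ≤ (f.be i * M ^ e * (v - u)) * (y - x) :=
        mul_le_mul_of_nonneg_right up hyx.le
    _ = (4 * 2 ^ e * (f.be i / f.al i)) *
        ((f.al i * (M ^ e / 2 ^ e) * ((y - x) / 4)) * (v - u)) := by
        field_simp
    _ ≤ _ := by
        apply mul_le_mul_of_nonneg_left _ (by positivity)
        exact mul_le_mul_of_nonneg_right lo hvu.le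

lemma slope_mv {x y : ℝ} (h : x < y) : ∃ ξ ∈ Ioo x y, f.F y - f.F x = deriv f.F ξ * (y - x) := by
  obtain ⟨ξ, hξ, h'⟩ := exists_hasDerivAt_eq_slope f.F (deriv f.F) h
    (fun t _ => (f.dF t).continuousAt.continuousWithinAt) (fun t _ => f.dF t)
  rw [eq_div_iff (by linarith)] at h'
  exact ⟨ξ, hξ, h'.symm⟩

lemma big_lower {δ : ℝ} (hδ : 0 < δ) (hδ1 : δ < 1) : ∃ η > 0, ∀ x y, δ ≤ y - x →
    η * (y - x) ≤ f.F y - f.F x := by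
  have hc : ContinuousOn (fun x => f.F (x + δ) - f.F x) (Icc 0 1) := by
    have := f.smooth.continuous
    fun_prop
  obtain ⟨x₀, _, hm⟩ := isCompact_Icc.exists_isMinOn (nonempty_Icc.2 zero_le_one) hc
  have h0 : 0 < f.F (x₀ + δ) - f.F x₀ := sub_pos.2 (f.mono (by linarith))
  set η := f.F (x₀ + δ) - f.F x₀
  have h1 : ∀ x, η ≤ f.F (x + δ) - f.F x := by
    intro x
    have := hm (show Int.fract x ∈ Icc (0 : ℝ) 1 from ⟨Int.fract_nonneg x, (Int.fract_lt_one x).le⟩)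
    simp only [Set.mem_ofPred_eq] at this
    have e1 := f.map_add_int (Int.fract x) ⌊x⌋
    have e2 := f.map_add_int (Int.fract x + δ) ⌊x⌋
    have e3 : Int.fract x + δ + ⌊x⌋ = x + δ := by rw [Int.fract]; ring
    rw [Int.fract_add_floor] at e1
    rw [e3] at e2
    linarith
  have h2 : ∀ (n : ℕ) x, n * η ≤ f.F (x + n * δ) - f.F x := by
    intro n x
    induction n with
    | zero => simp
    | succ n ih =>
      have := h1 (x + n * δ)
      push_cast
      have e : x + (n + 1) * δ = x + n * δ + δ := by ring
      rw [e]; linarith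
  refine ⟨η / (2 * δ), by positivity, fun x y hxy => ?_⟩
  set n := ⌊(y - x) / δ⌋₊ with hn
  have hn1 : (n : ℝ) ≤ (y - x) / δ := Nat.floor_le (div_nonneg (by linarith) hδ.le)
  have hn2 : (y - x) / δ < n + 1 := Nat.lt_floor_add_one _
  have hn3 : 1 ≤ n := Nat.le_floor (by rw [Nat.cast_one, le_div_iff₀ hδ]; linarith)
  have hn3' : (1 : ℝ) ≤ n := by exact_mod_cast hn3
  rw [le_div_iff₀ hδ] at hn1
  have h3 := h2 n x
  have h4 := f.mono.monotone (by linarith : x + n * δ ≤ y)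
  have h5 : (y - x) / δ ≤ 2 * n := by linarith
  calc η / (2 * δ) * (y - x) = η / 2 * ((y - x) / δ) := by field_simp
    _ ≤ η / 2 * (2 * n) := mul_le_mul_of_nonneg_left h5 (by positivity)
    _ ≤ _ := by linarith

lemma slope_compare : ∃ Q ≥ 1, ∀ x u v y, x ≤ u → u < v → v ≤ y →
    (f.F v - f.F u) * (y - x) ≤ Q * ((f.F y - f.F x) * (v - u)) := by
  obtain ⟨δ, η, hδ, hδ1, hη, hW, hfar⟩ := f.localData
  obtain ⟨η', hη', hbig⟩ := f.big_lower hδ hδ1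
  obtain ⟨B, hB, hB'⟩ := periodic_bound f.cont_deriv f.deriv_add_int
  have hq0 : ∀ i, 0 ≤ 4 * 2 ^ (f.s i - 1) * (f.be i / f.al i) := fun i => by
    have := f.al_pos i
    have := this.trans (f.al_lt_be i)
    positivity
  set Q := 1 + B / η + B / η' + ∑ i, 4 * 2 ^ (f.s i - 1) * (f.be i / f.al i) with hQ
  have hsum := Finset.sum_nonneg (s := Finset.univ) fun i _ => hq0 i
  have p1 : 0 ≤ B / η := by positivity
  have p2 : 0 ≤ B / η' := by positivity
  refine ⟨Q, by linarith, fun x u v y hxu huv hvy => ?_⟩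
  have hvu : 0 < v - u := by linarith
  have hyx : 0 < y - x := by linarith
  have hFyx : 0 < f.F y - f.F x := sub_pos.2 (f.mono (by linarith))
  have hFvu : 0 < f.F v - f.F u := sub_pos.2 (f.mono (by linarith))
  have up : f.F v - f.F u ≤ B * (v - u) := by
    obtain ⟨ξ, _, e⟩ := f.slope_mv huv
    rw [e]
    exact mul_le_mul_of_nonneg_right ((le_abs_self _).trans (hB' ξ)) hvu.le
  have gen : ∀ η₁ > 0, η₁ * (y - x) ≤ f.F y - f.F x → B / η₁ ≤ Q →
      (f.F v - f.F u) * (y - x) ≤ Q * ((f.F y - f.F x) * (v - u)) := by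
    intro η₁ h1 h2 h3
    calc (f.F v - f.F u) * (y - x) ≤ (B * (v - u)) * (y - x) :=
          mul_le_mul_of_nonneg_right up hyx.le
      _ = B / η₁ * ((η₁ * (y - x)) * (v - u)) := by field_simp
      _ ≤ B / η₁ * ((f.F y - f.F x) * (v - u)) := by
          apply mul_le_mul_of_nonneg_left _ (by positivity)
          exact mul_le_mul_of_nonneg_right h2 hvu.le
      _ ≤ _ := mul_le_mul_of_nonneg_right h3 (by positivity)
  rcases le_or_gt δ (y - x) with h | h
  · exact gen η' hη' (hbig x y h) (by linarith)
  · rcases f.dichotomy hfar h with ⟨i, k, hik⟩ | hf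
    · refine (f.slope_near hW i k hik hxu huv hvy).trans
        (mul_le_mul_of_nonneg_right ?_ (by positivity))
      have := Finset.single_le_sum (fun i _ => hq0 i) (Finset.mem_univ i)
      linarith
    · refine gen η hη ?_ (by linarith)
      obtain ⟨ξ, hξ, e⟩ := f.slope_mv (by linarith : x < y)
      rw [e]
      exact mul_le_mul_of_nonneg_right (hf ξ ⟨hξ.1.le, hξ.2.le⟩) hyx.le

/-- gauge function counting length and critical points -/
def V0 (x : ℝ) : ℝ := x + ∑ i, ((⌊x - f.c i⌋ : ℝ) + ⌈x - f.c i⌉)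

lemma V0_step {x y : ℝ} (h : x ≤ y) (i : Fin f.N) : 0 ≤
    ((⌊y - f.c i⌋ : ℝ) + ⌈y - f.c i⌉) - ((⌊x - f.c i⌋ : ℝ) + ⌈x - f.c i⌉) := by
  have h1 : ⌊x - f.c i⌋ ≤ ⌊y - f.c i⌋ := Int.floor_mono (by linarith)
  have h2 : ⌈x - f.c i⌉ ≤ ⌈y - f.c i⌉ := Int.ceil_mono (by linarith)
  have h1' : (⌊x - f.c i⌋ : ℝ) ≤ ⌊y - f.c i⌋ := by exact_mod_cast h1
  have h2' : (⌈x - f.c i⌉ : ℝ) ≤ ⌈y - f.c i⌉ := by exact_mod_cast h2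
  linarith

lemma V0_diff {x y : ℝ} (h : x ≤ y) : y - x ≤ f.V0 y - f.V0 x := by
  have := Finset.sum_nonneg (s := Finset.univ) fun i _ => f.V0_step h i
  rw [Finset.sum_sub_distrib] at this
  unfold V0
  linarith

lemma V0_crit {x y : ℝ} (h : x < y) {i : Fin f.N} {k : ℤ} (hk : f.c i + k ∈ Icc x y) :
    1 ≤ f.V0 y - f.V0 x := by
  have h1 := Finset.single_le_sum (fun i _ => f.V0_step h.le i) (Finset.mem_univ i)
  rw [Finset.sum_sub_distrib] at h1
  have h2 : (1 : ℝ) ≤ ((⌊y - f.c i⌋ : ℝ) + ⌈y - f.c i⌉) - ((⌊x - f.c i⌋ : ℝ) + ⌈x - f.c i⌉) := by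
    have a1 : ⌈x - f.c i⌉ ≤ k := Int.ceil_le.2 (by linarith [hk.1])
    have a2 : k ≤ ⌊y - f.c i⌋ := Int.le_floor.2 (by linarith [hk.2])
    have a3 : ⌊x - f.c i⌋ + 1 ≤ ⌈y - f.c i⌉ := by
      rw [Int.add_one_le_iff, Int.lt_ceil]
      exact (Int.floor_le _).trans_lt (by linarith)
    have : 1 ≤ (⌊y - f.c i⌋ + ⌈y - f.c i⌉) - (⌊x - f.c i⌋ + ⌈x - f.c i⌉) := by linarith
    exact_mod_cast this
  unfold V0
  linarith

lemma V0_per (x : ℝ) : f.V0 (x + 1) = f.V0 x + (1 + 2 * f.N) := by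
  unfold V0
  have : ∀ i, ((⌊x + 1 - f.c i⌋ : ℝ) + ⌈x + 1 - f.c i⌉) =
      ((⌊x - f.c i⌋ : ℝ) + ⌈x - f.c i⌉) + 2 := by
    intro i
    have e : x + 1 - f.c i = x - f.c i + 1 := by ring
    rw [e, Int.floor_add_one, Int.ceil_add_one]
    push_cast; ring
  rw [Finset.sum_congr rfl fun i _ => this i, Finset.sum_add_distrib]
  simp
  ring

lemma onestep : ∃ V : ℝ → ℝ, Monotone V ∧ (∃ K, ∀ x, V (x + 1) = V x + K) ∧
    ∀ a b c d, a < b → b < c → c < d →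
      CRle (Real.exp (V d - V a)) a b c d (f.F a) (f.F b) (f.F c) (f.F d) := by
  obtain ⟨δ, η, hδ, hδ1, hη, hW, hfar⟩ := f.localData
  obtain ⟨Q, hQ, hslope⟩ := f.slope_compare
  obtain ⟨B, hB, hB'⟩ := periodic_bound f.cont_deriv2 f.deriv2_add_int
  have hlog : 0 ≤ Real.log Q := Real.log_nonneg hQ
  have p1 : 0 ≤ 2 * Real.log Q / δ := by positivity
  have p2 : 0 ≤ 2 * (B / η) := by positivity
  set E := 2 * Real.log Q / δ + 2 * (B / η) with hE
  have hE0 : 0 ≤ E := by positivity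
  refine ⟨fun x => E * f.V0 x, ?_, ⟨E * (1 + 2 * f.N), fun x => ?_⟩, ?_⟩
  · intro x y h
    have := f.V0_diff h
    exact mul_le_mul_of_nonneg_left (by linarith) hE0
  · simp only [f.V0_per]; ring
  intro a b c d hab hbc hcd
  have hV := f.V0_diff (by linarith : a ≤ d)
  simp only [← mul_sub]
  set v := f.V0 d - f.V0 a
  have hFab := f.mono hab
  have hFbc := f.mono hbc
  have hFcd := f.mono hcd
  -- rough bound
  have gen : ∀ q ≥ 0, (f.F b - f.F a) * (c - a) ≤ q * ((f.F c - f.F a) * (b - a)) →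
      (f.F d - f.F c) * (d - b) ≤ q * ((f.F d - f.F b) * (d - c)) →
      q * q ≤ Real.exp (E * v) →
      CRle (Real.exp (E * v)) a b c d (f.F a) (f.F b) (f.F c) (f.F d) := by
    intro q hq h1 h2 h3
    rw [CRle_of_lt hab hbc hcd hFab hFbc hFcd]
    have := mul_le_mul h1 h2 (mul_nonneg (by linarith) (by linarith))
      (mul_nonneg hq (mul_nonneg (by linarith) (by linarith)))
    have h4 : 0 ≤ (f.F c - f.F a) * (b - a) * ((f.F d - f.F b) * (d - c)) :=
      mul_nonneg (mul_nonneg (by linarith) (by linarith)) (mul_nonneg (by linarith) (by linarith))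
    have h5 := mul_le_mul_of_nonneg_right h3 h4
    nlinarith
  have rough : δ ≤ v → CRle (Real.exp (E * v)) a b c d (f.F a) (f.F b) (f.F c) (f.F d) := by
    intro hv
    apply gen Q (by linarith) (hslope a a b c le_rfl hab hbc.le)
      (hslope b c d d hbc.le hcd le_rfl)
    have : 2 * Real.log Q ≤ E * v := by
      calc 2 * Real.log Q = (2 * Real.log Q / δ) * δ := by field_simp
        _ ≤ E * v := mul_le_mul (by linarith) hv hδ.le hE0
    calc Q * Q = Real.exp (2 * Real.log Q) := by
          rw [two_mul, Real.exp_add, Real.exp_log (by linarith)]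
      _ ≤ _ := Real.exp_le_exp.2 this
  rcases le_or_gt δ (d - a) with h | h
  · exact rough (by linarith)
  by_cases hcr : ∃ i, ∃ k : ℤ, f.c i + k ∈ Icc a d
  · obtain ⟨i, k, hk⟩ := hcr
    exact rough (by linarith [f.V0_crit (by linarith : a < d) hk])
  push Not at hcr
  rcases f.dichotomy hfar h with ⟨i, k, hik⟩ | hf
  · have key := ns_CR f.smooth (a := a - k) (b := b - k) (c := c - k) (d := d - k)
      (by
        intro x hx
        rcases (f.deriv_nonneg x).lt_or_eq with h | h
        · exact h
        · obtain ⟨j, l, e⟩ := f.critOnly x h.symm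
          exfalso
          apply hcr j (l + k)
          push_cast
          constructor <;> linarith [hx.1, hx.2])
      (by
        intro x hx
        have h1 := hik (x + k) ⟨by linarith [hx.1], by linarith [hx.2]⟩
        have e1 : x + k - f.c i - k = x - f.c i := by ring
        rw [e1] at h1
        have h2 := hW i (x - f.c i) (by linarith [abs_nonneg (x - f.c i)])
        rw [sub_add_cancel] at h2
        apply f.negSchwarzian i x h2
        rintro rfl
        exact hcr i k ⟨by linarith [hx.1], by linarith [hx.2]⟩)
      (by linarith) (by linarith) (by linarith)
    have e : ∀ x, f.F (x - k) = f.F x - k := by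
      intro x
      have := f.map_add_int (x - k) k
      rw [sub_add_cancel] at this; linarith
    have hexp : 1 ≤ Real.exp (E * v) := Real.one_le_exp (mul_nonneg hE0 (by linarith))
    refine CRle.mono ?_ hexp
    unfold CRle at *
    simpa only [e, sub_sub_sub_cancel_right] using key
  · have cmp : ∀ x u y w, x ∈ Icc a d → u ∈ Icc a d → y ∈ Icc a d → w ∈ Icc a d → x < u → y < w →
        (f.F u - f.F x) * (w - y) ≤ (1 + B / η * (d - a)) * ((f.F w - f.F y) * (u - x)) := by
      intro x u y w hx hu hy hw hxu hyw
      obtain ⟨ξ, hξ, e⟩ := f.slope_mv hxu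
      obtain ⟨ζ, hζ, e'⟩ := f.slope_mv hyw
      have hζ' : ζ ∈ Icc a d := ⟨hy.1.trans hζ.1.le, hζ.2.le.trans hw.2⟩
      have hξ' : ξ ∈ Icc a d := ⟨hx.1.trans hξ.1.le, hξ.2.le.trans hu.2⟩
      have h1 : deriv f.F ξ ≤ deriv f.F ζ + B * (d - a) := by
        have := Convex.norm_image_sub_le_of_norm_deriv_le (f := deriv f.F) (s := univ)
          (x := ζ) (y := ξ) (C := B)
          (fun t _ => (contDiff2_deriv f.smooth).differentiable (by norm_num) t)
          (fun t _ => hB' t) convex_univ (mem_univ _) (mem_univ _)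
        rw [Real.norm_eq_abs, Real.norm_eq_abs] at this
        have h3 : |ξ - ζ| ≤ d - a := by
          rw [abs_le]; constructor <;> linarith [hζ'.1, hζ'.2, hξ'.1, hξ'.2]
        have := le_abs_self (deriv f.F ξ - deriv f.F ζ)
        have := mul_le_mul_of_nonneg_left h3 hB.le
        linarith
      have h2 : deriv f.F ξ ≤ (1 + B / η * (d - a)) * deriv f.F ζ := by
        have h4 := hf ζ hζ'
        have h5 : B * (d - a) ≤ B / η * (d - a) * deriv f.F ζ := by
          calc B * (d - a) = B / η * (d - a) * η := by field_simp
            _ ≤ _ := mul_le_mul_of_nonneg_left h4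
              (mul_nonneg (by positivity) (by linarith))
        linarith
      rw [e, e']
      have h6 : 0 ≤ (u - x) * (w - y) := mul_nonneg (by linarith) (by linarith)
      have := mul_le_mul_of_nonneg_right h2 h6
      linarith
    have ma : a ∈ Icc a d := ⟨le_rfl, by linarith⟩
    have mb : b ∈ Icc a d := ⟨by linarith, by linarith⟩
    have mc : c ∈ Icc a d := ⟨by linarith, by linarith⟩
    have md : d ∈ Icc a d := ⟨by linarith, le_rfl⟩
    have hda : 0 ≤ B / η * (d - a) := mul_nonneg (by positivity) (by linarith)
    apply gen (1 + B / η * (d - a)) (by linarith) (cmp a b a c ma mb ma mc hab (by linarith))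
      (cmp c d b d mc md mb md hcd (by linarith))
    have h1 : 1 + B / η * (d - a) ≤ Real.exp (B / η * (d - a)) := by
      linarith [Real.add_one_le_exp (B / η * (d - a))]
    have h2 : 2 * (B / η) * (d - a) ≤ E * v := mul_le_mul (by linarith) hV (by linarith) hE0
    calc _ ≤ Real.exp (B / η * (d - a)) * Real.exp (B / η * (d - a)) :=
          mul_le_mul h1 h1 (by linarith) (Real.exp_pos _).le
      _ = Real.exp (2 * (B / η) * (d - a)) := by rw [← Real.exp_add]; congr 1; ring
      _ ≤ _ := Real.exp_le_exp.2 h2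

/-- power law for the map itself at a critical point -/
lemma critLaw (i : Fin f.N) : ∃ α B : ℝ, 0 < α ∧ 0 < B ∧ ∀ t, |t| ≤ 1 →
    α * |t| ^ f.s i ≤ |f.F (f.c i + t) - f.F (f.c i)| ∧
      |f.F (f.c i + t) - f.F (f.c i)| ≤ B * |t| ^ f.s i := by
  obtain ⟨δ, η, hδ, hδ1, hη, hW, hfar⟩ := f.localData
  obtain ⟨Q, hQ, hslope⟩ := f.slope_compare
  obtain ⟨η', hη', hbig⟩ := f.big_lower hδ hδ1
  have hal := f.al_pos i
  have hbe : 0 < f.be i := hal.trans (f.al_lt_be i)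
  have hs := f.s_gt_one i
  have he : 0 < f.s i - 1 := by linarith
  set s := f.s i
  have hd : ∀ t, HasDerivAt (fun t => f.F (t + f.c i)) (deriv f.F (t + f.c i)) t := fun t =>
    (f.dF (t + f.c i)).comp_add_const t (f.c i)
  have hpin : ∀ t, |t| < 3 * δ → f.al i * |t| ^ (s - 1) ≤ deriv f.F (t + f.c i) ∧
      deriv f.F (t + f.c i) ≤ f.be i * |t| ^ (s - 1) := by
    intro t ht
    have := f.pinch (hW i t ht) 0
    simpa using this
  -- estimate on an interval `[x,y]` with one endpoint 0
  have est : ∀ x y, x < y → (x = 0 ∨ y = 0) → y - x ≤ 1 →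
      min (f.al i * (1 / 2) ^ (s - 1) / 4) (η' * δ) * (y - x) ^ s ≤
        f.F (y + f.c i) - f.F (x + f.c i) ∧
      f.F (y + f.c i) - f.F (x + f.c i) ≤ max (f.be i) (1 / δ ^ s) * (y - x) ^ s := by
    intro x y hxy h0 h1
    have hl : 0 < y - x := by linarith
    have hM : max |x| |y| = y - x := by
      rcases h0 with rfl | rfl
      · rw [abs_zero, max_eq_right (abs_nonneg _), abs_of_pos hxy]; ring
      · rw [abs_zero, max_eq_left (abs_nonneg _), abs_of_neg hxy]; ring
    have hpw : (y - x) ^ s = (y - x) ^ (s - 1) * (y - x) := by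
      rw [← Real.rpow_add_one hl.ne']; congr 1; ring
    have hps : 0 < (y - x) ^ s := by positivity
    rcases lt_or_ge (y - x) δ with h | h
    · have hin : ∀ t ∈ Icc x y, |t| < 3 * δ := by
        intro t ht
        have := abs_le_max_abs_abs ht.1 ht.2
        rw [hM] at this; linarith
      have up := pow_upper (u := x) (v := y) he hbe hd (fun t ht => (hpin t (hin t ht)).2) le_rfl hxy le_rfl
      have lo := pow_lower he hal hd (fun t => f.deriv_nonneg _)
        (fun t ht => (hpin t (hin t ht)).1) hxy
      rw [hM] at up lo
      constructor
      · refine le_trans ?_ lo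
        refine le_trans (mul_le_mul_of_nonneg_right (min_le_left _ _) hps.le) ?_
        rw [hpw, div_eq_mul_one_div (y - x) 2, Real.mul_rpow hl.le (by norm_num)]
        apply le_of_eq; ring
      · refine up.trans (le_trans ?_ (mul_le_mul_of_nonneg_right (le_max_left _ _) hps.le))
        rw [hpw]; apply le_of_eq; ring
    · constructor
      · refine le_trans (mul_le_mul_of_nonneg_right (min_le_right _ _) hps.le) ?_
        have h3 : (y - x) ^ s ≤ 1 := Real.rpow_le_one hl.le h1 (by linarith)
        have h2 := hbig (x + f.c i) (y + f.c i) (by linarith)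
        have h4 : η' * δ * (y - x) ^ s ≤ η' * δ * 1 :=
          mul_le_mul_of_nonneg_left h3 (by positivity)
        have h5 : η' * δ ≤ η' * (y - x) := mul_le_mul_of_nonneg_left h hη'.le
        have : y + f.c i - (x + f.c i) = y - x := by ring
        rw [this] at h2
        linarith
      · refine le_trans ?_ (mul_le_mul_of_nonneg_right (le_max_right _ _) hps.le)
        have h2 := f.mono.monotone (by linarith : y + f.c i ≤ x + f.c i + 1)
        rw [f.deg1] at h2
        have h3 : δ ^ s ≤ (y - x) ^ s := Real.rpow_le_rpow hδ.le h (by linarith)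
        have h4 : 0 < δ ^ s := by positivity
        rw [div_mul_eq_mul_div, one_mul]
        have : 1 ≤ (y - x) ^ s / δ ^ s := by rw [le_div_iff₀ h4]; linarith
        linarith
  refine ⟨min (f.al i * (1 / 2) ^ (s - 1) / 4) (η' * δ), max (f.be i) (1 / δ ^ s),
    lt_min (by positivity) (by positivity), lt_max_of_lt_left hbe, fun t ht => ?_⟩
  rcases lt_trichotomy t 0 with h | h | h
  · have hab := abs_of_neg h
    rw [hab] at ht
    have := est t 0 h (Or.inr rfl) (by linarith)
    rw [zero_sub, zero_add, add_comm t] at this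
    rw [hab, abs_sub_comm, abs_of_pos (sub_pos.2 (f.mono (by linarith)))]
    exact this
  · subst h
    simp [Real.zero_rpow (by linarith : s ≠ 0)]
  · have hab := abs_of_pos h
    rw [hab] at ht
    have := est 0 t h (Or.inl rfl) (by linarith)
    rw [sub_zero, zero_add, add_comm t] at this
    rw [hab, abs_of_pos (sub_pos.2 (f.mono (by linarith)))]
    exact this

end MCM


lemma CRle.trans {C₁ C₂ a b c d a' b' c' d' a'' b'' c'' d'' : ℝ}
    (hC₂ : 0 ≤ C₂) (hac : a' < c') (hbd : b' < d')
    (h1 : CRle C₁ a b c d a' b' c' d') (h2 : CRle C₂ a' b' c' d' a'' b'' c'' d'') :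
    CRle (C₁ * C₂) a b c d a'' b'' c'' d'' := by
  unfold CRle at *
  have hD : 0 < |c' - a'| * |d' - b'| :=
    mul_pos (abs_pos.2 (by linarith)) (abs_pos.2 (by linarith))
  have hx : 0 ≤ |c - a| * |d - b| := by positivity
  have hz : 0 ≤ |c'' - a''| * |d'' - b''| := by positivity
  have e1 := mul_le_mul_of_nonneg_right h2 hx
  have e2 := mul_le_mul_of_nonneg_left h1 (mul_nonneg hC₂ hz)
  refine le_of_mul_le_mul_right ?_ hD
  nlinarith

lemma CRle.symm' {C a b c d a' b' c' d' : ℝ} (h : CRle C a b c d a' b' c' d') :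
    CRle C (-d) (-c) (-b) (-a) (-d') (-c') (-b') (-a') := by
  unfold CRle at *
  have e : ∀ x y : ℝ, |-x - -y| = |y - x| := fun x y => by congr 1; ring
  simp only [e]
  calc _ = |b' - a'| * |d' - c'| * (|c - a| * |d - b|) := by ring
    _ ≤ _ := h
    _ = _ := by ring

lemma CR_alg {C A a b c d a' b' c' d' : ℝ} (hC : 0 ≤ C) (hA : 0 ≤ A)
    (h1 : a < b) (h2 : b < c) (h3 : c < d) (h1' : a' < b') (h2' : b' < c') (h3' : c' < d')
    (h : CRle C a b c d a' b' c' d') (hL : c' - b' ≤ A * (b' - a')) (hR : c' - b' ≤ A * (d' - c')) :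
    c - b ≤ C * (1 + A) ^ 2 * (b - a) ∧ c - b ≤ C * (1 + A) ^ 2 * (d - c) := by
  rw [CRle_of_lt h1 h2 h3 h1' h2' h3'] at h
  have pL' : 0 < b' - a' := by linarith
  have pR' : 0 < d' - c' := by linarith
  have pL : 0 < b - a := by linarith
  have pR : 0 < d - c := by linarith
  have pM : 0 < c - b := by linarith
  have e1 : c' - a' ≤ (1 + A) * (b' - a') := by linarith
  have e2 : d' - b' ≤ (1 + A) * (d' - c') := by linarith
  have e3 : (c' - a') * (d' - b') ≤ ((1 + A) * (b' - a')) * ((1 + A) * (d' - c')) :=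
    mul_le_mul e1 e2 (by linarith) (by positivity)
  have e4 : 0 ≤ C * ((b - a) * (d - c)) := by positivity
  have e5 := mul_le_mul_of_nonneg_left e3 e4
  have key : (c - a) * (d - b) ≤ C * (1 + A) ^ 2 * ((b - a) * (d - c)) := by
    have : 0 < (b' - a') * (d' - c') := by positivity
    refine le_of_mul_le_mul_left ?_ this
    linarith
  constructor
  · refine le_of_mul_le_mul_right ?_ pR
    nlinarith [mul_pos pL pM, mul_pos pL pR, mul_pos pM pM]
  · refine le_of_mul_le_mul_right ?_ pL
    nlinarith [mul_pos pR pM, mul_pos pL pR, mul_pos pM pM]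

lemma sum_disj {V : ℝ → ℝ} (hV : Monotone V) (s : Finset ℕ) (u v : ℕ → ℝ) (A : ℝ) :
    ∀ B, A ≤ B → (∀ i ∈ s, A ≤ u i) → (∀ i ∈ s, u i < v i) → (∀ i ∈ s, v i ≤ B) →
    (∀ i ∈ s, ∀ j ∈ s, i ≠ j → v i ≤ u j ∨ v j ≤ u i) →
    ∑ i ∈ s, (V (v i) - V (u i)) ≤ V B - V A := by
  induction s using Finset.induction_on_max_value u with
  | empty => intro B hAB _ _ _ _; simpa using hV hAB
  | insert a s ha hmax ih =>
    intro B hAB h1 h2 h3 h4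
    rw [Finset.sum_insert ha]
    have h5 := ih (u a) (h1 a (Finset.mem_insert_self _ _))
      (fun i hi => h1 i (Finset.mem_insert_of_mem hi))
      (fun i hi => h2 i (Finset.mem_insert_of_mem hi))
      (fun i hi => by
        rcases h4 i (Finset.mem_insert_of_mem hi) a (Finset.mem_insert_self _ _)
          (by rintro rfl; exact ha hi) with h | h
        · exact h
        · have := h2 a (Finset.mem_insert_self _ _)
          linarith [hmax i hi])
      (fun i hi j hj => h4 i (Finset.mem_insert_of_mem hi) j (Finset.mem_insert_of_mem hj))
    have := hV (h3 a (Finset.mem_insert_self _ _))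
    linarith

/-- The abstract dynamical system generated by a lift and the integer translations, with
orientation `σ`. -/
structure Sys where
  T : ℤ → ℤ → ℝ → ℝ
  ρ : ℝ
  σ : ℝ
  hσ : σ = 1 ∨ σ = -1
  V : ℝ → ℝ
  K : ℝ
  zero : ∀ x, T 0 0 x = x
  add : ∀ a p b r x, T a p (T b r x) = T (a + b) (p + r) x
  tr : ∀ p x, T 0 p x = x - σ * p
  mono : ∀ a p, StrictMono (T a p)
  cont : ∀ a p, Continuous (T a p)
  lt : ∀ (a p b r : ℤ) x, σ * (a * ρ - p) < σ * (b * ρ - r) → T a p x < T b r x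
  le : ∀ (a p b r : ℤ) x, σ * (a * ρ - p) ≤ σ * (b * ρ - r) → T a p x ≤ T b r x
  Vmono : Monotone V
  Vper : ∀ x, V (x + 1) = V x + K
  step : ∀ a b c d, a < b → b < c → c < d →
    CRle (Real.exp (V d - V a)) a b c d (T 1 0 a) (T 1 0 b) (T 1 0 c) (T 1 0 d)

namespace Sys

/-- reflection of the line -/
def refl (S : Sys) : Sys where
  T a p x := - S.T a p (-x)
  ρ := S.ρ
  σ := - S.σ
  hσ := by rcases S.hσ with h | h <;> simp [h]
  V x := - S.V (-x)
  K := S.K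
  zero x := by simp [S.zero]
  add a p b r x := by simp [S.add]
  tr p x := by simp [S.tr]; ring
  mono a p x y h := by
    have := S.mono a p (neg_lt_neg h)
    simpa using this
  cont a p := by have := S.cont a p; fun_prop
  lt a p b r x h := by
    have := S.lt b r a p (-x) (by linarith)
    simpa using this
  le a p b r x h := by
    have := S.le b r a p (-x) (by linarith)
    simpa using this
  Vmono x y h := by
    have := S.Vmono (neg_le_neg h)
    simpa using this
  Vper x := by
    have := S.Vper (-(x + 1))
    have e : -(x + 1) + 1 = -x := by ring
    rw [e] at this
    linarith
  step a b c d h1 h2 h3 := by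
    have := (S.step (-d) (-c) (-b) (-a) (by linarith) (by linarith) (by linarith)).symm'
    simp only [neg_neg] at this
    refine this.mono (le_of_eq ?_)
    congr 1; ring

variable (S : Sys)

/-- rotation displacement -/
def θ (a p : ℤ) : ℝ := S.σ * (a * S.ρ - p)

lemma exists_int (m : ℤ) : ∃ r : ℤ, S.σ * r = m := by
  rcases S.hσ with h | h
  · exact ⟨m, by simp [h]⟩
  · exact ⟨-m, by simp [h]⟩

lemma int_σ (r : ℤ) : ∃ m : ℤ, S.σ * r = m := by
  rcases S.hσ with h | h
  · exact ⟨r, by simp [h]⟩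
  · exact ⟨-r, by simp [h]⟩

lemma T_shift (a r : ℤ) (x : ℝ) : S.T a r x = S.T a 0 x - S.σ * r := by
  rw [← S.tr, S.add]; simp

lemma comm (a p b r : ℤ) (x : ℝ) : S.T a p (S.T b r x) = S.T b r (S.T a p x) := by
  rw [S.add, S.add, add_comm a, add_comm p]

lemma per (a p : ℤ) (x : ℝ) (m : ℤ) : S.T a p (x + m) = S.T a p x + m := by
  obtain ⟨r, hr⟩ := S.exists_int (-m)
  have e : ∀ y, y + m = S.T 0 r y := by
    intro y; rw [S.tr, hr]; push_cast; ring
  rw [e, e, S.comm]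

lemma V_int (x : ℝ) (m : ℤ) : S.V (x + m) = S.V x + m * S.K := by
  induction m with
  | zero => simp
  | succ n ih =>
    push_cast at *
    rw [← add_assoc, S.Vper, ih]; ring
  | pred n ih =>
    push_cast at *
    have := S.Vper (x + (-(n : ℝ) - 1))
    have e : x + (-(n : ℝ) - 1) + 1 = x + -n := by ring
    rw [e, ih] at this
    linarith

lemma V_shift (i r : ℤ) (x y : ℝ) :
    S.V (S.T i r y) - S.V (S.T i r x) = S.V (S.T i 0 y) - S.V (S.T i 0 x) := by
  obtain ⟨m, hm⟩ := S.int_σ r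
  rw [S.T_shift i r y, S.T_shift i r x, hm]
  have e : ∀ z : ℝ, z - m = z + ((-m : ℤ) : ℝ) := fun z => by push_cast; ring
  rw [e, e, S.V_int, S.V_int]; ring

/-- two consecutive closest return levels -/
structure Lvl (q p q' p' : ℤ) : Prop where
  hq : 0 < q
  hqq : q ≤ q'
  pos : 0 < S.θ q p
  neg : S.θ q' p' < 0
  sum : 0 < S.θ q p + S.θ q' p'
  one : S.θ q p < 1
  best : ∀ i r, 0 < i → i < q' → S.θ q p ≤ |S.θ i r|

/-- cross-ratio inequality on a level -/
def CRI (q p q' : ℤ) (C : ℝ) : Prop :=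
  ∀ (m : ℕ) (r : ℤ), (m : ℤ) ≤ q + q' → ∀ a b c d, a < b → b < c → c < d →
    d ≤ S.T (5 * q) (5 * p) a →
    CRle C a b c d (S.T m r a) (S.T m r b) (S.T m r c) (S.T m r d)

variable {S} {q p q' p' : ℤ}

lemma Lvl.lt_self (L : S.Lvl q p q' p') (x : ℝ) : x < S.T q p x := by
  have := S.lt 0 0 q p x (by have := L.pos; unfold θ at this; simpa using this)
  rwa [S.zero] at this

lemma Lvl.le_add_one (L : S.Lvl q p q' p') (x : ℝ) : S.T q p x < x + 1 := by
  obtain ⟨r, hr⟩ := S.exists_int (-1)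
  have e : x + 1 = S.T 0 r x := by rw [S.tr, hr]; push_cast; ring
  rw [e]
  apply S.lt
  have := L.one
  unfold θ at this
  push_cast at *
  linarith

lemma Lvl.sum_bound (L : S.Lvl q p q' p') (w : ℝ) :
    ∑ i ∈ Finset.range q'.toNat, (S.V (S.T i 0 (S.T q p w)) - S.V (S.T i 0 w)) ≤ S.K := by
  have hr : ∀ i : ℕ, ∃ r : ℤ, S.σ * r = (⌊S.T i 0 w - w⌋ : ℤ) := fun i => S.exists_int _
  choose r hr using hr
  have hfr : ∀ i : ℕ, S.T i (r i) w = w + Int.fract (S.T i 0 w - w) := by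
    intro i; rw [S.T_shift, hr, Int.fract]; ring
  have hK : S.K = S.V (w + 1) - S.V w := by rw [S.Vper]; ring
  rw [hK]
  rw [Finset.sum_congr rfl fun (i : ℕ) _ => (S.V_shift (i : ℤ) (r i) w (S.T q p w)).symm]
  have gap : ∀ i j : ℕ, ∀ a b : ℤ, i < j → j < q'.toNat →
      S.T i a (S.T q p w) ≤ S.T j b w ∨ S.T j b (S.T q p w) ≤ S.T i a w := by
    intro i j a b hij hj
    have h1 := L.best ((j : ℤ) - i) (b - a) (by omega) (by omega)
    rw [S.add, S.add]
    rcases le_abs.1 h1 with h | h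
    · left; apply S.le
      unfold θ at h; push_cast at *; linarith
    · right; apply S.le
      unfold θ at h; push_cast at *; linarith
  apply sum_disj S.Vmono
  · linarith
  · intro i _; rw [hfr]; linarith [Int.fract_nonneg (S.T i 0 w - w)]
  · intro i _; exact S.mono _ _ (L.lt_self w)
  · intro i hi
    rw [Finset.mem_range] at hi
    have h1 : S.T i (r i) w < w + 1 := by
      rw [hfr]; linarith [Int.fract_lt_one (S.T i 0 w - w)]
    obtain ⟨s, hs⟩ := S.exists_int (-1)
    have e : ∀ x, x + 1 = S.T 0 s x := fun x => by rw [S.tr, hs]; push_cast; ring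
    rcases Nat.eq_zero_or_pos i with h0 | h0
    · subst h0
      have h2 : r 0 = 0 := by
        have := hr 0
        simp only [Nat.cast_zero, S.zero, sub_self, Int.floor_zero, Int.cast_zero] at this
        rcases S.hσ with h | h <;> rw [h] at this <;> simpa using this
      rw [h2]
      simp only [Nat.cast_zero, S.zero]
      exact (L.le_add_one w).le
    · rcases gap 0 i s (r i) h0 hi with h | h
      · have h3 := S.mono 0 s (L.lt_self w)
        rw [e] at h1
        simp only [Nat.cast_zero] at h
        linarith
      · rw [e]; simpa using h
  · intro i hi j hj hij
    rw [Finset.mem_range] at hi hj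
    rcases lt_or_gt_of_ne hij with h | h
    · exact gap i j _ _ h hj
    · exact (gap j i _ _ h hi).symm

lemma iter_CR (S : Sys) (m : ℕ) {a b c d : ℝ} (h1 : a < b) (h2 : b < c) (h3 : c < d) :
    CRle (Real.exp (∑ i ∈ Finset.range m, (S.V (S.T i 0 d) - S.V (S.T i 0 a)))) a b c d
      (S.T m 0 a) (S.T m 0 b) (S.T m 0 c) (S.T m 0 d) := by
  induction m with
  | zero =>
    simp only [Nat.cast_zero, S.zero, Finset.range_zero, Finset.sum_empty, Real.exp_zero]
    unfold CRle
    rw [one_mul]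
  | succ m ih =>
    rw [Finset.sum_range_succ, Real.exp_add]
    have h := S.step _ _ _ _ (S.mono m 0 h1) (S.mono m 0 h2) (S.mono m 0 h3)
    simp only [S.add, add_zero] at h
    have e : (1 : ℤ) + m = ((m + 1 : ℕ) : ℤ) := by push_cast; ring
    rw [e] at h
    exact ih.trans (Real.exp_pos _).le (S.mono m 0 (h1.trans h2)) (S.mono m 0 (h2.trans h3)) h

lemma Lvl.cri (L : S.Lvl q p q' p') : S.CRI q p q' (Real.exp (10 * S.K)) := by
  intro m r hm a b c d h1 h2 h3 hd
  have key := iter_CR S m h1 h2 h3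
  have e : CRle (Real.exp (10 * S.K)) a b c d (S.T m 0 a) (S.T m 0 b) (S.T m 0 c) (S.T m 0 d) := by
    refine key.mono (Real.exp_le_exp.2 ?_)
    have nn : ∀ w (i : ℕ), 0 ≤ S.V (S.T i 0 (S.T q p w)) - S.V (S.T i 0 w) := fun w i =>
      sub_nonneg.2 (S.Vmono (S.mono _ _ (L.lt_self w)).le)
    have two : ∀ w, ∑ i ∈ Finset.range m, (S.V (S.T i 0 (S.T q p w)) - S.V (S.T i 0 w)) ≤
        2 * S.K := by
      intro w
      have hq := L.hq
      have hqq := L.hqq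
      calc _ ≤ ∑ i ∈ Finset.range (q'.toNat + q'.toNat),
            (S.V (S.T i 0 (S.T q p w)) - S.V (S.T i 0 w)) := by
            apply Finset.sum_le_sum_of_subset_of_nonneg
            · apply Finset.range_mono; omega
            · intro i _ _; exact nn w i
        _ = ∑ i ∈ Finset.range q'.toNat, (S.V (S.T i 0 (S.T q p w)) - S.V (S.T i 0 w)) +
            ∑ i ∈ Finset.range q'.toNat, (S.V (S.T i 0 (S.T q p (S.T q' 0 w))) -
              S.V (S.T i 0 (S.T q' 0 w))) := by
            rw [Finset.sum_range_add]
            congr 1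
            apply Finset.sum_congr rfl
            intro i _
            have e : ((q'.toNat + i : ℕ) : ℤ) = q' + i := by push_cast; omega
            rw [e]
            simp only [S.add]
            congr 3 <;> ring
        _ ≤ 2 * S.K := by
            linarith [L.sum_bound w, L.sum_bound (S.T q' 0 w)]
    have e5 : S.T (5 * q) (5 * p) a =
        S.T q p (S.T q p (S.T q p (S.T q p (S.T q p a)))) := by
      simp only [S.add]; congr 1 <;> ring
    rw [e5] at hd
    calc _ ≤ ∑ i ∈ Finset.range m,
          (S.V (S.T i 0 (S.T q p (S.T q p (S.T q p (S.T q p (S.T q p a)))))) -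
            S.V (S.T i 0 a)) := by
          apply Finset.sum_le_sum
          intro i _
          have := S.Vmono ((S.mono i 0).monotone hd)
          linarith
      _ = ∑ i ∈ Finset.range m, (S.V (S.T i 0 (S.T q p a)) - S.V (S.T i 0 a))
        + ∑ i ∈ Finset.range m, (S.V (S.T i 0 (S.T q p (S.T q p a))) - S.V (S.T i 0 (S.T q p a)))
        + ∑ i ∈ Finset.range m, (S.V (S.T i 0 (S.T q p (S.T q p (S.T q p a)))) -
            S.V (S.T i 0 (S.T q p (S.T q p a))))
        + ∑ i ∈ Finset.range m, (S.V (S.T i 0 (S.T q p (S.T q p (S.T q p (S.T q p a))))) -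
            S.V (S.T i 0 (S.T q p (S.T q p (S.T q p a)))))
        + ∑ i ∈ Finset.range m, (S.V (S.T i 0 (S.T q p (S.T q p (S.T q p (S.T q p (S.T q p a)))))) -
            S.V (S.T i 0 (S.T q p (S.T q p (S.T q p (S.T q p a)))))) := by
          simp only [Finset.sum_sub_distrib]; ring
      _ ≤ _ := by
          linarith [two a, two (S.T q p a), two (S.T q p (S.T q p a)),
            two (S.T q p (S.T q p (S.T q p a))), two (S.T q p (S.T q p (S.T q p (S.T q p a))))]
  simp only [S.T_shift m r]
  unfold CRle at *
  simpa only [sub_sub_sub_cancel_right] using e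

lemma Lvl.hit (L : S.Lvl q p q' p') (x y : ℝ) : ∃ (i : ℕ) (r : ℤ), (i : ℤ) < q + q' ∧
    y ≤ S.T i r x ∧ S.T i r x < S.T q p y := by
  have hq := L.hq
  have hqq := L.hqq
  have hr : ∀ i : ℕ, ∃ r : ℤ, S.σ * r = (⌊S.T i 0 x - y⌋ : ℤ) := fun i => S.exists_int _
  choose r hr using hr
  have hfr : ∀ i : ℕ, S.T i (r i) x = y + Int.fract (S.T i 0 x - y) := by
    intro i; rw [S.T_shift, hr, Int.fract]; ring
  obtain ⟨i, hi, hmin⟩ := Finset.exists_min_image (Finset.range (q + q').toNat)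
    (fun i : ℕ => Int.fract (S.T i 0 x - y)) ⟨0, by rw [Finset.mem_range]; omega⟩
  rw [Finset.mem_range] at hi
  have minimal : ∀ (j : ℤ) (s : ℤ), 0 ≤ j → j < q + q' → y ≤ S.T j s x →
      S.T i (r i) x ≤ S.T j s x := by
    intro j s hj0 hj hy
    lift j to ℕ using hj0
    have h1 := hmin j (by rw [Finset.mem_range]; omega)
    obtain ⟨m, hm⟩ := S.int_σ s
    have h2 : Int.fract (S.T j 0 x - y) = Int.fract (S.T j s x - y) := by
      rw [S.T_shift j s, hm]
      have : S.T j 0 x - m - y = S.T j 0 x - y - m := by ring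
      rw [this, Int.fract_sub_intCast]
    have h3 : Int.fract (S.T j s x - y) ≤ S.T j s x - y := by
      have : (0 : ℝ) ≤ ⌊S.T j s x - y⌋ := by exact_mod_cast Int.floor_nonneg.2 (by linarith)
      rw [Int.fract]; linarith
    rw [hfr]; linarith
  refine ⟨i, r i, by omega, ?_, ?_⟩
  · rw [hfr]; linarith [Int.fract_nonneg (S.T i 0 x - y)]
  · rcases le_or_gt q i with h | h
    · have h1 : S.T (-q) (-p) (S.T i (r i) x) < y := by
        by_contra hc
        push Not at hc
        rw [S.add] at hc
        have h2 := minimal _ _ (by omega) (by omega) hc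
        have h3 : S.T (-q + i) (-p + r i) x < S.T i (r i) x := by
          apply S.lt
          have := L.pos
          unfold θ at this; push_cast; linarith
        linarith
      have h4 := S.mono q p h1
      rw [S.add] at h4
      simpa [S.zero] using h4
    · have h1 : S.T q' p' (S.T i (r i) x) < y := by
        by_contra hc
        push Not at hc
        rw [S.add] at hc
        have h2 := minimal _ _ (by omega) (by omega) hc
        have h3 : S.T (q' + i) (p' + r i) x < S.T i (r i) x := by
          apply S.lt
          have := L.neg
          unfold θ at this; push_cast; linarith
        linarith
      have h4 := S.mono q p h1
      refine lt_trans ?_ h4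
      simp only [S.add]
      apply S.lt
      have := L.sum
      unfold θ at this; push_cast; linarith

/-- the constant of bounded ratio of adjacent fundamental intervals -/
def A3 (C : ℝ) : ℝ :=
  C * (1 + (C * (1 + 1) ^ 2 + C * (1 + C * (1 + 1) ^ 2) ^ 2 * (C * (1 + 1) ^ 2))) ^ 2

lemma Lvl.core1 (L : S.Lvl q p q' p') {C : ℝ} (hC : 1 ≤ C) (H : S.CRI q p q' C) (x : ℝ) :
    S.T q p x - x ≤ A3 C * (S.T q p (S.T q p x) - S.T q p x) ∧
      S.T q p (S.T q p x) - S.T q p x ≤ A3 C * (S.T q p x - x) := by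
  have hq := L.hq
  have hqq := L.hqq
  have hC0 : 0 ≤ C := by linarith
  -- the minimal displacement
  obtain ⟨z, hz⟩ : ∃ z, ∀ w, S.T q p z - z ≤ S.T q p w - w := by
    have hc : ContinuousOn (fun x => S.T q p x - x) (Icc 0 1) := by
      have := S.cont q p
      fun_prop
    obtain ⟨z, _, hm⟩ := isCompact_Icc.exists_isMinOn (nonempty_Icc.2 zero_le_one) hc
    refine ⟨z, fun w => ?_⟩
    have h1 := hm (show Int.fract w ∈ Icc (0 : ℝ) 1 from
      ⟨Int.fract_nonneg w, (Int.fract_lt_one w).le⟩)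
    simp only [Set.mem_ofPred_eq] at h1
    have h2 := S.per q p (Int.fract w) ⌊w⌋
    rw [Int.fract_add_floor] at h2
    have h3 := Int.fract_add_floor w
    linarith
  set h := S.T q p with hh
  set k := S.T (-q) (-p) with hk
  have hkx : ∀ x, h (k x) = x := fun x => by rw [hh, hk, S.add]; simp [S.zero]
  have khx : ∀ x, k (h x) = x := fun x => by rw [hh, hk, S.add]; simp [S.zero]
  have lt_h : ∀ x, x < h x := L.lt_self
  have k_lt : ∀ x, k x < x := fun x => by have := lt_h (k x); rwa [hkx] at this
  have room : ∀ x, h (h x) ≤ S.T (5 * q) (5 * p) (k x) := by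
    intro x
    rw [hh, hk]
    simp only [S.add]
    apply S.le
    have := L.pos
    unfold θ at this; push_cast; linarith
  -- general use of the cross ratio inequality
  have use : ∀ (m : ℕ) (r : ℤ) (x A : ℝ), (m : ℤ) ≤ q + q' → 0 ≤ A →
      h (S.T m r x) - S.T m r x ≤ A * (S.T m r x - k (S.T m r x)) →
      h (S.T m r x) - S.T m r x ≤ A * (h (h (S.T m r x)) - h (S.T m r x)) →
      h x - x ≤ C * (1 + A) ^ 2 * (x - k x) ∧ h x - x ≤ C * (1 + A) ^ 2 * (h (h x) - h x) := by
    intro m r x A hm hA h1 h2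
    have cr := H m r hm (k x) x (h x) (h (h x)) (k_lt x) (lt_h x) (lt_h _) (room x)
    rw [hk, hh, S.comm m r, S.comm m r, S.comm m r q p] at cr
    rw [← hk, ← hh] at cr
    rw [S.comm m r] at cr
    rw [← hh] at cr
    exact CR_alg hC0 hA (k_lt x) (lt_h x) (lt_h _) (k_lt _) (lt_h _) (lt_h _) cr h1 h2
  have hqn : ((q.toNat : ℕ) : ℤ) = q := by omega
  have useh : ∀ (x A : ℝ), 0 ≤ A → h (h x) - h x ≤ A * (h x - x) →
      h (h x) - h x ≤ A * (h (h (h x)) - h (h x)) →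
      h x - x ≤ C * (1 + A) ^ 2 * (x - k x) ∧ h x - x ≤ C * (1 + A) ^ 2 * (h (h x) - h x) := by
    intro x A hA h1 h2
    have := use q.toNat p x A (by omega) hA
    rw [hqn, ← hh, khx] at this
    exact this h1 h2
  set m := h z - z with hm
  have mpos : 0 < m := sub_pos.2 (lt_h z)
  set A1 := C * (1 + 1) ^ 2 with hA1
  have A1pos : 1 ≤ A1 := by rw [hA1]; linarith
  -- step 1
  have s1 : z - k z ≤ A1 * m := by
    have := (useh (k z) 1 zero_le_one (by rw [hkx]; have := hz (k z); rw [hkx] at this; linarith)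
      (by rw [hkx]; linarith [hz (h z)])).2
    rw [hkx] at this
    exact this
  have s2 : k z - k (k z) ≤ C * (1 + A1) ^ 2 * (A1 * m) := by
    have := (useh (k (k z)) A1 (by linarith)
      (by
        rw [hkx, hkx]
        have := hz (k (k z)); rw [hkx] at this
        have := mul_le_mul_of_nonneg_left this (by linarith : 0 ≤ A1)
        linarith)
      (by rw [hkx, hkx]; exact s1)).2
    rw [hkx, hkx] at this
    exact this.trans (mul_le_mul_of_nonneg_left s1 (by positivity))
  set A2 := A1 + C * (1 + A1) ^ 2 * A1 with hA2
  have A2pos : 0 ≤ A2 := by positivity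
  have fin : ∀ x, h x - x ≤ A3 C * (x - k x) ∧ h x - x ≤ A3 C * (h (h x) - h x) := by
    intro x
    obtain ⟨i, r, hi, hy1, hy2⟩ := L.hit x (k (k z))
    rw [← hh, hkx] at hy2
    set y := S.T i r x with hy
    have h1 : h y < z := by
      have := S.mono q p hy2
      rw [← hh, hkx] at this; exact this
    have h2 : h y - y ≤ A2 * m := by
      have : A2 * m = A1 * m + C * (1 + A1) ^ 2 * (A1 * m) := by rw [hA2]; ring
      linarith
    apply use i r x A2 hi.le A2pos
    · rw [← hy]
      have := hz (k y)
      rw [hkx] at this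
      exact h2.trans (mul_le_mul_of_nonneg_left this A2pos)
    · rw [← hy]
      exact h2.trans (mul_le_mul_of_nonneg_left (hz (h y)) A2pos)
  refine ⟨(fin x).2, ?_⟩
  have := (fin (h x)).1
  rwa [khx] at this

end Sys


namespace Sys
variable {S : Sys} {q p q' p' : ℤ}

lemma Lvl.g_lt (L : S.Lvl q p q' p') (x : ℝ) : S.T q' p' x < x := by
  have := S.lt q' p' 0 0 x (by have := L.neg; unfold θ at this; simpa using this)
  rwa [S.zero] at this

lemma Lvl.lt_gh (L : S.Lvl q p q' p') (x : ℝ) : x < S.T q' p' (S.T q p x) := by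
  rw [S.add]
  have := S.lt 0 0 (q' + q) (p' + p) x (by
    have := L.sum; unfold θ at this; push_cast; linarith)
  rwa [S.zero] at this

lemma Lvl.k_lt_g (L : S.Lvl q p q' p') (x : ℝ) : S.T (-q) (-p) x < S.T q' p' x := by
  apply S.lt
  have := L.sum; unfold θ at this; push_cast; linarith

/-- ratio constant at a critical point -/
def A4 (C A α B s : ℝ) : ℝ := (A * (1 + A) ^ 5 * C * B / α) ^ (s - 1)⁻¹

lemma A4_alg {C A α B s d H L M R L' M' R' : ℝ} (hC : 0 ≤ C) (hA : 1 ≤ A) (hα : 0 < α) (hB : 0 < B)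
    (hs : 1 < s) (d0 : 0 < d) (H0 : 0 < H) (L0 : 0 < L) (M0 : 0 < M) (R0 : 0 < R)
    (L0' : 0 < L') (M0' : 0 < M') (R0' : 0 < R')
    (cr : L' * R' * ((L + M) * (M + R)) ≤ C * (L * R) * ((L' + M') * (M' + R')))
    (h1 : d ≤ A * L') (h2 : H ≤ (1 + A) * R') (h3 : L' + M' ≤ (1 + A) ^ 2 * H)
    (h4 : M' + R' ≤ (1 + A) ^ 2 * H) (h5 : L ≤ B * d ^ s) (h6 : α * H ^ s ≤ M) :
    H ≤ A4 C A α B s * d := by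
  have hs0 : 0 < s - 1 := by linarith
  have e1 : L' * R' * (L + M) ≤ C * L * ((L' + M') * (M' + R')) := by
    refine le_of_mul_le_mul_right ?_ R0
    have : 0 ≤ L' * R' * (L + M) * M := by positivity
    linarith
  have e2 : (L' + M') * (M' + R') ≤ ((1 + A) ^ 2 * H) * ((1 + A) ^ 2 * H) :=
    mul_le_mul h3 h4 (by positivity) (by positivity)
  have e3 : L' * R' * M ≤ C * (B * d ^ s) * (((1 + A) ^ 2 * H) * ((1 + A) ^ 2 * H)) := by
    calc L' * R' * M ≤ L' * R' * (L + M) := by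
          apply mul_le_mul_of_nonneg_left _ (by positivity); linarith
      _ ≤ _ := e1
      _ ≤ C * (B * d ^ s) * ((L' + M') * (M' + R')) := by gcongr
      _ ≤ _ := by gcongr
  have e4 : d * H * (α * H ^ s) ≤ (A * L') * ((1 + A) * R') * M := by gcongr
  have e5 : d * H * (α * H ^ s) ≤ A * (1 + A) ^ 5 * C * B * d ^ s * H * H := by
    calc _ ≤ _ := e4
      _ = A * (1 + A) * (L' * R' * M) := by ring
      _ ≤ A * (1 + A) * (C * (B * d ^ s) * (((1 + A) ^ 2 * H) * ((1 + A) ^ 2 * H))) := by gcongr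
      _ = _ := by ring
  have eH : H ^ s = H ^ (s - 1) * H := by
    rw [← Real.rpow_add_one H0.ne']; ring_nf
  have ed : d ^ s = d ^ (s - 1) * d := by
    rw [← Real.rpow_add_one d0.ne']; ring_nf
  rw [eH, ed] at e5
  have e6 : α * H ^ (s - 1) ≤ A * (1 + A) ^ 5 * C * B * d ^ (s - 1) := by
    have : 0 < d * H * H := by positivity
    refine le_of_mul_le_mul_right ?_ this
    linarith
  have e7 : (H / d) ^ (s - 1) ≤ A * (1 + A) ^ 5 * C * B / α := by
    rw [Real.div_rpow H0.le d0.le, div_le_div_iff₀ (by positivity) hα]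
    linarith
  have e8 : H / d ≤ A4 C A α B s := by
    unfold A4
    have := Real.rpow_le_rpow (by positivity) e7 (inv_nonneg.2 hs0.le)
    rwa [Real.rpow_rpow_inv (by positivity) hs0.ne'] at this
  rwa [div_le_iff₀ d0] at e8

lemma Lvl.core2 (L : S.Lvl q p q' p') {C A α B s c : ℝ} (hC : 0 ≤ C) (H : S.CRI q p q' C)
    (hA : 1 ≤ A)
    (hh : ∀ x, S.T q p x - x ≤ A * (S.T q p (S.T q p x) - S.T q p x) ∧
      S.T q p (S.T q p x) - S.T q p x ≤ A * (S.T q p x - x))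
    (hg : ∀ x, x - S.T q' p' x ≤ A * (S.T q' p' x - S.T q' p' (S.T q' p' x)))
    (hα : 0 < α) (hB : 0 < B) (hs : 1 < s)
    (law : ∀ t : ℝ, |t| ≤ 1 → α * |t| ^ s ≤ |S.T 1 0 (c + t) - S.T 1 0 c| ∧
      |S.T 1 0 (c + t) - S.T 1 0 c| ≤ B * |t| ^ s) :
    S.T q p c - c ≤ A4 C A α B s * (c - S.T q' p' c) := by
  have hq := L.hq
  have hqq := L.hqq
  have F := S.mono 1 0
  set h := S.T q p with hh'
  set g := S.T q' p' with hg'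
  set k := S.T (-q) (-p) with hk
  have hkx : ∀ x, h (k x) = x := fun x => by rw [hh', hk, S.add]; simp [S.zero]
  have khx : ∀ x, k (h x) = x := fun x => by rw [hh', hk, S.add]; simp [S.zero]
  have lt_h : ∀ x, x < h x := L.lt_self
  have g_lt : ∀ x, g x < x := L.g_lt
  have lt_gh : ∀ x, x < g (h x) := L.lt_gh
  have k_lt_g : ∀ x, k x < g x := L.k_lt_g
  have gh : ∀ x, g (h x) = h (g x) := fun x => S.comm _ _ _ _ x
  have one : ∀ x, h x < x + 1 := L.le_add_one
  have hkk : ∀ x, x - k x ≤ A * (h x - x) := fun x => by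
    have := (hh (k x)).1; rwa [hkx] at this
  have hmono : StrictMono h := S.mono q p
  have gmono : StrictMono g := S.mono q' p'
  have kmono : StrictMono k := S.mono (-q) (-p)
  have cr := H (q' - 1).toNat p' (by omega) (S.T 1 0 (g c)) (S.T 1 0 c) (S.T 1 0 (h c))
    (S.T 1 0 (h (h c))) (F (g_lt c)) (F (lt_h c)) (F (lt_h _)) (by
      rw [hh', hg']; simp only [S.add]
      apply S.le
      have h1 := L.pos
      have h2 := L.sum
      unfold θ at h1 h2; push_cast; linarith)
  have eg : ∀ x, S.T ((q' - 1).toNat : ℕ) p' (S.T 1 0 x) = g x := by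
    intro x
    rw [S.add, hg']
    congr 1
    · omega
    · ring
  simp only [eg] at cr
  rw [CRle_of_lt (F (g_lt c)) (F (lt_h c)) (F (lt_h _)) (gmono (g_lt c)) (gmono (lt_h c))
    (gmono (lt_h _))] at cr
  have d0 : 0 < c - g c := by linarith [g_lt c]
  have H0 : 0 < h c - c := by linarith [lt_h c]
  have kc : c - k c ≤ A * (h c - c) := hkk c
  have kkc : k c - k (k c) ≤ A * (A * (h c - c)) := by
    have := hkk (k c); rw [hkx] at this
    exact this.trans (mul_le_mul_of_nonneg_left kc (by linarith))
  have d1 : c - g c ≤ 1 := by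
    have := one (k c); rw [hkx] at this
    linarith [k_lt_g c]
  have H1 : h c - c ≤ 1 := by linarith [one c]
  have l1 := (law (-(c - g c)) (by rw [abs_neg, abs_of_pos d0]; exact d1)).2
  have l2 := (law (h c - c) (by rw [abs_of_pos H0]; exact H1)).1
  rw [abs_neg, abs_of_pos d0, show c + -(c - g c) = g c by ring,
    abs_of_neg (by linarith [F (g_lt c)])] at l1
  rw [abs_of_pos H0, show c + (h c - c) = h c by ring,
    abs_of_pos (by linarith [F (lt_h c)])] at l2
  have w1 : h c - c ≤ (1 + A) * (g (h (h c)) - g (h c)) := by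
    have e1 : k (g (h c)) = g c := by rw [gh, khx]
    have e2 := hkk (g (h c))
    rw [e1, ← gh] at e2
    have e3 := hmono (lt_gh c)
    rw [← gh] at e3
    linarith [g_lt c]
  have hh2 := (hh c).2
  have w2 : k (k c) < g (g c) := (kmono (k_lt_g c)).trans (k_lt_g (g c)) |>.trans_le' (le_refl _)
  have hAA : 0 ≤ A * A * (h c - c) := by positivity
  refine A4_alg (L := S.T 1 0 c - S.T 1 0 (g c)) (M := S.T 1 0 (h c) - S.T 1 0 c)
    (R := S.T 1 0 (h (h c)) - S.T 1 0 (h c)) (L' := g c - g (g c)) (M' := g (h c) - g c)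
    (R' := g (h (h c)) - g (h c)) hC hA hα hB hs d0 H0
    (by linarith [F (g_lt c)]) (by linarith [F (lt_h c)]) (by linarith [F (lt_h (h c))])
    (by linarith [g_lt (g c)]) (by linarith [gmono (lt_h c)]) (by linarith [gmono (lt_h (h c))])
    ?_ (hg c) w1 ?_ ?_ (by linarith) l2
  · refine le_trans (le_of_eq ?_) (cr.trans (le_of_eq ?_)) <;> ring
  · nlinarith [g_lt (h c)]
  · nlinarith [g_lt (h (h c)), k_lt_g c]

lemma Lvl.core3 (L : S.Lvl q p q' p') {C A E c z y c₀ : ℝ} (hC : 0 ≤ C) (H : S.CRI q p q' C)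
    (hA : 1 ≤ A)
    (hh : ∀ x, S.T q p x - x ≤ A * (S.T q p (S.T q p x) - S.T q p x) ∧
      S.T q p (S.T q p x) - S.T q p x ≤ A * (S.T q p x - x))
    (hg : ∀ x, S.T q' p' x - S.T q' p' (S.T q' p' x) ≤ A * (x - S.T q' p' x))
    (hE : 0 ≤ E) (hc : S.T q p c - c ≤ E * (c - S.T q' p' c))
    (i : ℕ) (r : ℤ) (hi : (i : ℤ) ≤ q + q') (hz : S.T i r z = c)
    (z1 : S.T q' p' y ≤ z) (z2 : z ≤ y) (z3 : c₀ ≤ z) (z4 : z ≤ S.T q p c₀) :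
    S.T q p c₀ - c₀ ≤ (1 + A) ^ 2 * (C * (1 + (A + E)) ^ 2) * (y - S.T q' p' y) := by
  set h := S.T q p with hh'
  set g := S.T q' p' with hg'
  set k := S.T (-q) (-p) with hk
  have hkx : ∀ x, h (k x) = x := fun x => by rw [hh', hk, S.add]; simp [S.zero]
  have khx : ∀ x, k (h x) = x := fun x => by rw [hh', hk, S.add]; simp [S.zero]
  have lt_h : ∀ x, x < h x := L.lt_self
  have g_lt : ∀ x, g x < x := L.g_lt
  have hkk : ∀ x, x - k x ≤ A * (h x - x) := fun x => by
    have := (hh (k x)).1; rwa [hkx] at this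
  have hmono : StrictMono h := S.mono q p
  have gmono : StrictMono g := S.mono q' p'
  have kmono : StrictMono k := S.mono (-q) (-p)
  have cr := H i r hi (g z) z (h z) (h (h z)) (g_lt z) (lt_h z) (lt_h _) (by
      rw [hh', hg']; simp only [S.add]
      apply S.le
      have h1 := L.pos
      have h2 := L.sum
      unfold θ at h1 h2; push_cast; linarith)
  have eh : ∀ x, S.T i r (h x) = h (S.T i r x) := fun x => S.comm _ _ _ _ x
  have eg : ∀ x, S.T i r (g x) = g (S.T i r x) := fun x => S.comm _ _ _ _ x
  rw [eg, eh, eh, eh, hz] at cr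
  have h1 := (CR_alg hC (by linarith : 0 ≤ A + E) (g_lt z) (lt_h z) (lt_h _) (g_lt c) (lt_h c)
    (lt_h _) cr (by nlinarith [g_lt c]) (by nlinarith [lt_h (h c), (hh c).1])).1
  have h2 : z - g z ≤ (1 + A) * (y - g y) := by
    have := gmono.monotone z1
    linarith [hg y]
  have h3 : h c₀ - c₀ ≤ (1 + A) * (h z - z) := by
    have e1 := hmono.monotone z3
    have e2 := kmono.monotone z4
    rw [khx] at e2
    linarith [hkk z]
  have p1 : 0 ≤ C * (1 + (A + E)) ^ 2 := by positivity
  calc _ ≤ _ := h3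
    _ ≤ (1 + A) * (C * (1 + (A + E)) ^ 2 * ((1 + A) * (y - g y))) := by
        apply mul_le_mul_of_nonneg_left _ (by linarith)
        exact h1.trans (mul_le_mul_of_nonneg_left h2 p1)
    _ = _ := by ring

end Sys



lemma gauss_mem {ρ : ℝ} (hirr : Irrational ρ) (hmem : ρ ∈ Set.Ioo (0 : ℝ) 1)
    (n : ℕ) : Irrational (gaussMap^[n] ρ) ∧ gaussMap^[n] ρ ∈ Set.Ioo (0 : ℝ) 1 := by
  induction n with
  | zero => exact ⟨hirr, hmem⟩
  | succ n ih =>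
    rw [Function.iterate_succ_apply']
    have h1 : Irrational (gaussMap (gaussMap^[n] ρ)) := by
      unfold gaussMap Int.fract
      exact (ih.1.inv).sub_intCast _
    refine ⟨h1, lt_of_le_of_ne (Int.fract_nonneg _) (fun h => ?_), Int.fract_lt_one _⟩
    rw [← h] at h1
    exact h1 ⟨0, by simp⟩

lemma cf_rel {ρ : ℝ} (hirr : Irrational ρ) (hmem : ρ ∈ Set.Ioo (0 : ℝ) 1)
    (n : ℕ) : 1 ≤ cfDigit ρ n ∧
    (cfDigit ρ n : ℝ) = (gaussMap^[n] ρ)⁻¹ - gaussMap^[n + 1] ρ := by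
  obtain ⟨_, h0, h1⟩ := gauss_mem hirr hmem n
  have h2 : 1 ≤ ⌊(gaussMap^[n] ρ)⁻¹⌋ := by
    rw [Int.le_floor]; push_cast
    exact (one_le_inv₀ h0).2 h1.le
  constructor
  · unfold cfDigit; omega
  · rw [Function.iterate_succ_apply', gaussMap, Int.fract]
    have : ((cfDigit ρ n : ℤ) : ℝ) = (⌊(gaussMap^[n] ρ)⁻¹⌋ : ℝ) := by
      unfold cfDigit; rw [Int.toNat_of_nonneg (by omega)]
    push_cast at this
    rw [this]; ring

lemma th_rel {ρ : ℝ} (hirr : Irrational ρ) (hmem : ρ ∈ Set.Ioo (0 : ℝ) 1)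
    (n : ℕ) : (qDen ρ (n + 1) * ρ - pNum ρ (n + 1) : ℝ) =
    -(qDen ρ n * ρ - pNum ρ n) * gaussMap^[n + 1] ρ := by
  induction n with
  | zero =>
    have h := (cf_rel hirr hmem 0).2
    have h0 := hmem.1.ne'
    simp only [qDen, pNum, Function.iterate_zero, id] at *
    rw [h]; push_cast; field_simp; ring
  | succ n ih =>
    have h := (cf_rel hirr hmem (n + 1)).2
    have h0 := (gauss_mem hirr hmem (n + 1)).2.1.ne'
    have e1 : qDen ρ (n + 1 + 1) = cfDigit ρ (n + 1) * qDen ρ (n + 1) + qDen ρ n := rfl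
    have e2 : pNum ρ (n + 1 + 1) = cfDigit ρ (n + 1) * pNum ρ (n + 1) + pNum ρ n := rfl
    rw [e1, e2]; push_cast
    rw [h]
    have ih' : (qDen ρ n * ρ - pNum ρ n : ℝ) =
        -(qDen ρ (n + 1) * ρ - pNum ρ (n + 1)) * (gaussMap^[n + 1] ρ)⁻¹ := by
      rw [ih]; field_simp
    linear_combination ih'

lemma th_pos {ρ : ℝ} (hirr : Irrational ρ) (hmem : ρ ∈ Set.Ioo (0 : ℝ) 1)
    (n : ℕ) : 0 < (-1 : ℝ) ^ n * (qDen ρ n * ρ - pNum ρ n) ∧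
    (-1 : ℝ) ^ n * (qDen ρ n * ρ - pNum ρ n) < 1 := by
  induction n with
  | zero => simpa [qDen, pNum] using hmem
  | succ n ih =>
    rw [th_rel hirr hmem n, pow_succ]
    obtain ⟨_, h0, h1⟩ := gauss_mem hirr hmem (n + 1)
    have e : (-1 : ℝ) ^ n * -1 * (-(qDen ρ n * ρ - pNum ρ n) * gaussMap^[n + 1] ρ) =
      ((-1 : ℝ) ^ n * (qDen ρ n * ρ - pNum ρ n)) * gaussMap^[n + 1] ρ := by ring
    rw [e]
    exact ⟨mul_pos ih.1 h0, by nlinarith⟩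

lemma th_dec {ρ : ℝ} (hirr : Irrational ρ) (hmem : ρ ∈ Set.Ioo (0 : ℝ) 1)
    (n : ℕ) : (-1 : ℝ) ^ (n + 1) * (qDen ρ (n + 1) * ρ - pNum ρ (n + 1)) <
    (-1 : ℝ) ^ n * (qDen ρ n * ρ - pNum ρ n) := by
  rw [th_rel hirr hmem n, pow_succ]
  obtain ⟨_, h0, h1⟩ := gauss_mem hirr hmem (n + 1)
  have := (th_pos hirr hmem n).1
  have e : (-1 : ℝ) ^ n * -1 * (-(qDen ρ n * ρ - pNum ρ n) * gaussMap^[n + 1] ρ) =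
      ((-1 : ℝ) ^ n * (qDen ρ n * ρ - pNum ρ n)) * gaussMap^[n + 1] ρ := by ring
  rw [e]
  nlinarith

lemma qDen_pos {ρ : ℝ} (hirr : Irrational ρ) (hmem : ρ ∈ Set.Ioo (0 : ℝ) 1)
    (n : ℕ) : 0 < qDen ρ n ∧ qDen ρ n ≤ qDen ρ (n + 1) := by
  induction n with
  | zero => simpa [qDen] using (cf_rel hirr hmem 0).1
  | succ n ih =>
    have e1 : qDen ρ (n + 1 + 1) = cfDigit ρ (n + 1) * qDen ρ (n + 1) + qDen ρ n := rfl
    have := (cf_rel hirr hmem (n + 1)).1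
    refine ⟨by omega, ?_⟩
    rw [e1]; nlinarith

lemma cf_det {ρ : ℝ} (n : ℕ) : (qDen ρ n * pNum ρ (n + 1) - qDen ρ (n + 1) * pNum ρ n : ℤ) = (-1) ^ n := by
  induction n with
  | zero => simp [qDen, pNum]
  | succ n ih =>
    have e1 : qDen ρ (n + 1 + 1) = cfDigit ρ (n + 1) * qDen ρ (n + 1) + qDen ρ n := rfl
    have e2 : pNum ρ (n + 1 + 1) = cfDigit ρ (n + 1) * pNum ρ (n + 1) + pNum ρ n := rfl
    rw [e1, e2]; push_cast
    rw [pow_succ, ← ih]; ring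

lemma best_aux {q p q' p' : ℤ} {ρ : ℝ} (hq : 0 < q) (hq' : 0 < q') {σ : ℝ} (hσ : |σ| = 1)
    (h1 : 0 < σ * (q * ρ - p)) (h2 : σ * (q' * ρ - p') < 0)
    (det : q * p' - q' * p = 1 ∨ q * p' - q' * p = -1) (i r : ℤ) (hi : 0 < i) (hi' : i < q') :
    σ * (q * ρ - p) ≤ |σ * (i * ρ - r)| := by
  obtain ⟨x, y, hx, hy⟩ : ∃ x y : ℤ, i = x * q + y * q' ∧ r = x * p + y * p' := by
    rcases det with h | h
    · exact ⟨i * p' - r * q', r * q - i * p, by linear_combination (-i) * h,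
        by linear_combination (-r) * h⟩
    · exact ⟨-(i * p' - r * q'), -(r * q - i * p), by linear_combination (i) * h,
        by linear_combination (r) * h⟩
  have e : σ * (i * ρ - r) = x * (σ * (q * ρ - p)) + y * (σ * (q' * ρ - p')) := by
    rw [hx, hy]; push_cast; ring
  rw [e]
  set t := σ * (q * ρ - p)
  set t' := σ * (q' * ρ - p')
  rcases lt_trichotomy y 0 with h | h | h
  · have hx1 : 1 ≤ x := by
      by_contra hc
      nlinarith [mul_nonneg (by omega : 0 ≤ -x) hq.le, mul_pos (by omega : 0 < -y) hq']
    refine le_trans ?_ (le_abs_self _)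
    have a1 : (1 : ℝ) ≤ x := by exact_mod_cast hx1
    have a2 : (y : ℝ) < 0 := by exact_mod_cast h
    nlinarith [mul_pos_of_neg_of_neg a2 h2]
  · have hx1 : 1 ≤ x := by
      by_contra hc
      rw [h] at hx
      nlinarith [mul_nonneg (by omega : 0 ≤ -x) hq.le]
    refine le_trans ?_ (le_abs_self _)
    have a1 : (1 : ℝ) ≤ x := by exact_mod_cast hx1
    rw [h]; push_cast
    nlinarith
  · have hx1 : x ≤ -1 := by
      by_contra hc
      nlinarith [mul_nonneg (by omega : 0 ≤ x) hq.le, mul_le_mul_of_nonneg_right (by omega : 1 ≤ y) hq'.le]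
    refine le_trans ?_ (neg_le_abs _)
    have a1 : (x : ℝ) ≤ -1 := by exact_mod_cast hx1
    have a2 : (0 : ℝ) < y := by exact_mod_cast h
    nlinarith [mul_neg_of_pos_of_neg a2 h2]

lemma Sys.lvl (S : Sys) {ρ : ℝ} (hirr : Irrational ρ) (hmem : ρ ∈ Set.Ioo (0 : ℝ) 1)
    (hρ : S.ρ = ρ) (n : ℕ) (hσ : S.σ = (-1) ^ n) :
    S.Lvl (qDen ρ n) (pNum ρ n) (qDen ρ (n + 1)) (pNum ρ (n + 1)) := by
  have h0 := th_pos hirr hmem n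
  have h1 := th_pos hirr hmem (n + 1)
  have h2 := th_dec hirr hmem n
  have h3 := qDen_pos hirr hmem n
  have h4 := qDen_pos hirr hmem (n + 1)
  rw [pow_succ] at h1 h2
  rw [← hσ, ← hρ] at h0 h1 h2
  rw [hρ] at h0 h1 h2
  have u : ∀ a p : ℕ, S.θ a p = S.σ * (a * ρ - p) := fun a p => by
    unfold Sys.θ; rw [hρ]; push_cast; rfl
  refine ⟨by exact_mod_cast h3.1, by exact_mod_cast h3.2, ?_, ?_, ?_, ?_, ?_⟩
  · rw [u]; exact h0.1
  · rw [u]; linarith [h1.1]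
  · rw [u, u]; linarith
  · rw [u]; exact h0.2
  · intro i r hi hi'
    have := @best_aux (qDen ρ n) (pNum ρ n) (qDen ρ (n + 1)) (pNum ρ (n + 1)) ρ
      (by exact_mod_cast h3.1) (by exact_mod_cast h4.1) S.σ (by rw [hσ]; simp)
      (by push_cast; exact h0.1) (by push_cast; linarith [h1.1])
      (by rw [cf_det n]; exact neg_one_pow_eq_or ℤ n) i r hi hi'
    rw [u]
    unfold Sys.θ
    rw [hρ]
    push_cast at this
    exact this

namespace MCM
variable (f : MCM)

lemma surj : Function.Surjective f.F := by
  intro y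
  have h1 : f.F (⌊y - f.F 0⌋ : ℝ) = f.F 0 + ⌊y - f.F 0⌋ := by
    have := f.map_add_int 0 ⌊y - f.F 0⌋
    rwa [zero_add] at this
  have h2 : f.F ((⌊y - f.F 0⌋ : ℝ) + 1) = f.F 0 + ⌊y - f.F 0⌋ + 1 := by rw [f.deg1, h1]
  have := intermediate_value_Icc (by linarith : (⌊y - f.F 0⌋ : ℝ) ≤ (⌊y - f.F 0⌋ : ℝ) + 1)
    (f.smooth.continuous.continuousOn)
  obtain ⟨x, _, hx⟩ := this (show y ∈ _ by
    rw [h1, h2]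
    exact ⟨by linarith [Int.floor_le (y - f.F 0)], by linarith [Int.lt_floor_add_one (y - f.F 0)]⟩)
  exact ⟨x, hx⟩

lemma exists_sys {ρ : ℝ} (hirr : Irrational ρ) (hrot : HasRotationNumber f.F ρ) :
    ∃ S : Sys, S.ρ = ρ ∧ S.σ = 1 ∧ ∀ (n : ℕ) (p : ℤ) x, S.T n p x = f.F^[n] x - p := by
  obtain ⟨u, hu⟩ : IsUnit f.lift1 :=
    CircleDeg1Lift.isUnit_iff_bijective.2 ⟨f.mono.injective, f.surj⟩
  have hτ : CircleDeg1Lift.translationNumber (u : CircleDeg1Lift) = ρ := by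
    rw [hu]; exact CircleDeg1Lift.translationNumber_eq_of_tendsto₀ _ hrot
  obtain ⟨V, hV, ⟨K, hK⟩, hst⟩ := f.onestep
  have mulx : ∀ (a b : ℤ) x, ((u ^ a : CircleDeg1Liftˣ) : CircleDeg1Lift)
      (((u ^ b : CircleDeg1Liftˣ) : CircleDeg1Lift) x) =
      ((u ^ (a + b) : CircleDeg1Liftˣ) : CircleDeg1Lift) x := by
    intro a b x; rw [zpow_add]; rfl
  have one : ∀ x, ((u ^ (1 : ℤ) : CircleDeg1Liftˣ) : CircleDeg1Lift) x = f.F x := by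
    intro x; rw [zpow_one, hu]; rfl
  have lt : ∀ (a p b r : ℤ) (x : ℝ), (a * ρ - p) < (b * ρ - r) →
      ((u ^ a : CircleDeg1Liftˣ) : CircleDeg1Lift) x - p <
      ((u ^ b : CircleDeg1Liftˣ) : CircleDeg1Lift) x - r := by
    intro a p b r x h
    have h1 : CircleDeg1Lift.translationNumber ((u ^ (a - b) : CircleDeg1Liftˣ) : CircleDeg1Lift)
        < ((p - r : ℤ) : ℝ) := by
      rw [CircleDeg1Lift.translationNumber_zpow, hτ]; push_cast; linarith
    have h2 := CircleDeg1Lift.map_lt_of_translationNumber_lt_int _ h1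
      (((u ^ b : CircleDeg1Liftˣ) : CircleDeg1Lift) x)
    rw [mulx, sub_add_cancel] at h2
    push_cast at h2
    linarith
  refine ⟨{ T := fun a p x => ((u ^ a : CircleDeg1Liftˣ) : CircleDeg1Lift) x - p
            ρ := ρ
            σ := 1
            hσ := Or.inl rfl
            V := V
            K := K
            zero := by intro x; simp
            add := ?_
            tr := by intro p x; simp
            mono := ?_
            cont := ?_
            lt := ?_
            le := ?_
            Vmono := hV
            Vper := hK
            step := ?_ }, rfl, rfl, ?_⟩
  · intro a p b r x
    rw [CircleDeg1Lift.map_sub_int, mulx]; push_cast; ring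
  · intro a p x y h
    have := (CircleDeg1Lift.toOrderIso (u ^ a)).strictMono h
    simp only [CircleDeg1Lift.coe_toOrderIso] at this
    simpa using this
  · intro a p
    have := (CircleDeg1Lift.toOrderIso (u ^ a)).continuous
    simp only [CircleDeg1Lift.coe_toOrderIso] at this
    exact this.sub continuous_const
  · intro a p b r x h
    exact lt a p b r x (by linarith)
  · intro a p b r x h
    rcases lt_or_eq_of_le h with h | h
    · exact (lt a p b r x (by linarith)).le
    · have h1 : ((a - b : ℤ) : ℝ) * ρ = ((p - r : ℤ) : ℝ) := by push_cast; linarith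
      have h2 : a - b = 0 := by
        by_contra hc
        exact (hirr.intCast_mul hc) ⟨(p - r : ℤ), by rw [h1]; push_cast; rfl⟩
      rw [h2] at h1
      have h3 : p - r = 0 := by
        have : ((p - r : ℤ) : ℝ) = 0 := by rw [← h1]; simp
        exact_mod_cast this
      rw [show a = b by omega, show p = r by omega]
  · intro a b c d h1 h2 h3
    simpa only [one, Int.cast_zero, sub_zero] using hst a b c d h1 h2 h3
  · intro n p x
    have : ((u ^ (n : ℤ) : CircleDeg1Liftˣ) : CircleDeg1Lift) x = f.F^[n] x := by
      rw [zpow_natCast, Units.val_pow_eq_pow_val, hu, CircleDeg1Lift.coe_pow]; rfl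
    simp only [this]

lemma deriv_iter (m : ℕ) (x : ℝ) (h : deriv (f.F^[m]) x = 0) :
    ∃ i < m, deriv f.F (f.F^[i] x) = 0 := by
  have hd : Differentiable ℝ f.F := f.smooth.differentiable (by norm_num)
  induction m with
  | zero => simp at h
  | succ m ih =>
    rw [Function.iterate_succ', deriv_comp x (hd _) ((hd.iterate m) x)] at h
    rcases mul_eq_zero.1 h with h | h
    · exact ⟨m, by omega, h⟩
    · obtain ⟨i, hi, h⟩ := ih h
      exact ⟨i, by omega, h⟩

end MCM


namespace Sys

/-- the final constant attached to a critical point -/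
def Kc (K α B s : ℝ) : ℝ :=
  (1 + A3 (Real.exp (10 * K))) ^ 2 * (Real.exp (10 * K) *
    (1 + (A3 (Real.exp (10 * K)) + A4 (Real.exp (10 * K)) (A3 (Real.exp (10 * K))) α B s)) ^ 2)

lemma A3_ge {C : ℝ} (hC : 1 ≤ C) : 1 ≤ A3 C := by
  unfold A3
  have h1 : 0 ≤ C * (1 + 1) ^ 2 + C * (1 + C * (1 + 1) ^ 2) ^ 2 * (C * (1 + 1) ^ 2) := by positivity
  have h2 := one_le_pow₀ (n := 2) (by linarith :
    1 ≤ 1 + (C * (1 + 1) ^ 2 + C * (1 + C * (1 + 1) ^ 2) ^ 2 * (C * (1 + 1) ^ 2)))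
  nlinarith

lemma Kc_nonneg (K α B s : ℝ) : 0 ≤ Kc K α B s := by
  unfold Kc; positivity

lemma final_one (S : Sys) {ρ : ℝ} (hirr : Irrational ρ) (hmem : ρ ∈ Set.Ioo (0 : ℝ) 1)
    (hρ : S.ρ = ρ) (n : ℕ) (hσ : S.σ = (-1) ^ n) {α B s c : ℝ}
    (hα : 0 < α) (hB : 0 < B) (hs : 1 < s)
    (law : ∀ t : ℝ, |t| ≤ 1 → α * |t| ^ s ≤ |S.T 1 0 (c + t) - S.T 1 0 c| ∧
      |S.T 1 0 (c + t) - S.T 1 0 c| ≤ B * |t| ^ s)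
    (c₀ y z : ℝ) (k : ℕ) (hk : k < cfDigit ρ (n + 1))
    (hy : y = S.T (qDen ρ n + k * qDen ρ (n + 1) : ℤ) (pNum ρ n + k * pNum ρ (n + 1) : ℤ) c₀)
    (hz : z ∈ uIcc y (S.T (qDen ρ (n + 1)) (pNum ρ (n + 1)) y))
    (i : ℕ) (r : ℤ) (hi : i < qDen ρ (n + 1)) (hzc : S.T i r z = c) :
    |S.T (qDen ρ n) (pNum ρ n) c₀ - c₀| ≤
      Kc S.K α B s * |S.T (qDen ρ (n + 1)) (pNum ρ (n + 1)) y - y| ∧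
    |S.T (qDen ρ (n + 1)) (pNum ρ (n + 1)) y - y| ≤ |S.T (qDen ρ n) (pNum ρ n) c₀ - c₀| := by
  have L := S.lvl hirr hmem hρ n hσ
  have L' := S.refl.lvl hirr hmem hρ (n + 1) (by
    change -S.σ = _
    rw [hσ, pow_succ]; ring)
  have hK : 0 ≤ S.K := by
    have h1 := S.Vper 0
    have h2 := S.Vmono (by norm_num : (0 : ℝ) ≤ 0 + 1)
    linarith
  have hC : 1 ≤ Real.exp (10 * S.K) := Real.one_le_exp (by positivity)
  have hC0 : 0 ≤ Real.exp (10 * S.K) := by linarith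
  have hA := A3_ge hC
  have hh := L.core1 hC L.cri
  have hg : ∀ x, x - S.T (qDen ρ (n + 1)) (pNum ρ (n + 1)) x ≤ A3 (Real.exp (10 * S.K)) *
      (S.T (qDen ρ (n + 1)) (pNum ρ (n + 1)) x -
        S.T (qDen ρ (n + 1)) (pNum ρ (n + 1)) (S.T (qDen ρ (n + 1)) (pNum ρ (n + 1)) x)) ∧
      S.T (qDen ρ (n + 1)) (pNum ρ (n + 1)) x -
        S.T (qDen ρ (n + 1)) (pNum ρ (n + 1)) (S.T (qDen ρ (n + 1)) (pNum ρ (n + 1)) x) ≤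
      A3 (Real.exp (10 * S.K)) * (x - S.T (qDen ρ (n + 1)) (pNum ρ (n + 1)) x) := by
    intro x
    have := L'.core1 (C := Real.exp (10 * S.K)) hC L'.cri (-x)
    simp only [refl, neg_neg] at this
    constructor
    · linarith [this.1]
    · linarith [this.2]
  have c2 := L.core2 hC0 L.cri hA hh (fun x => (hg x).1) hα hB hs law
  have gy := L.g_lt y
  rw [uIcc_of_ge gy.le] at hz
  have hE : 0 ≤ A4 (Real.exp (10 * S.K)) (A3 (Real.exp (10 * S.K))) α B s := by
    unfold A4; positivity
  have hk' : ((k + 1 : ℕ) : ℝ) ≤ cfDigit ρ (n + 1) := by exact_mod_cast hk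
  have low : c₀ ≤ S.T (qDen ρ (n + 1)) (pNum ρ (n + 1)) y := by
    rw [hy, S.add]
    have := S.le 0 0 (qDen ρ (n + 1) + (qDen ρ n + k * qDen ρ (n + 1)))
      (pNum ρ (n + 1) + (pNum ρ n + k * pNum ρ (n + 1))) c₀ (by
        have h1 := (th_pos hirr hmem (n + 2)).1
        have h2 := L.neg
        have e1 : qDen ρ (n + 2) = cfDigit ρ (n + 1) * qDen ρ (n + 1) + qDen ρ n := rfl
        have e2 : pNum ρ (n + 2) = cfDigit ρ (n + 1) * pNum ρ (n + 1) + pNum ρ n := rfl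
        rw [e1, e2, show (-1 : ℝ) ^ (n + 2) = (-1) ^ n by rw [pow_add]; simp, ← hσ] at h1
        unfold θ at h2
        rw [hρ] at h2 ⊢
        push_cast at *
        nlinarith)
    rwa [S.zero] at this
  have high : y ≤ S.T (qDen ρ n) (pNum ρ n) c₀ := by
    rw [hy]
    apply S.le
    have h2 := L.neg
    unfold θ at h2
    have hk0 : (0 : ℝ) ≤ k := Nat.cast_nonneg k
    push_cast at *
    nlinarith
  have c3 := L.core3 hC0 L.cri hA hh (fun x => (hg x).2) hE c2 i r
    (by omega) hzc hz.1 hz.2 (low.trans hz.1) (hz.2.trans high)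
  rw [abs_of_pos (by linarith [L.lt_self c₀]), abs_of_neg (by linarith), neg_sub]
  refine ⟨c3, by linarith⟩

lemma final_two (S : Sys) {ρ : ℝ} (hirr : Irrational ρ) (hmem : ρ ∈ Set.Ioo (0 : ℝ) 1)
    (hρ : S.ρ = ρ) (n : ℕ) (hσ : S.σ = 1) {α B s c : ℝ}
    (hα : 0 < α) (hB : 0 < B) (hs : 1 < s)
    (law : ∀ t : ℝ, |t| ≤ 1 → α * |t| ^ s ≤ |S.T 1 0 (c + t) - S.T 1 0 c| ∧
      |S.T 1 0 (c + t) - S.T 1 0 c| ≤ B * |t| ^ s)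
    (c₀ y z : ℝ) (k : ℕ) (hk : k < cfDigit ρ (n + 1))
    (hy : y = S.T (qDen ρ n + k * qDen ρ (n + 1) : ℤ) (pNum ρ n + k * pNum ρ (n + 1) : ℤ) c₀)
    (hz : z ∈ uIcc y (S.T (qDen ρ (n + 1)) (pNum ρ (n + 1)) y))
    (i : ℕ) (r : ℤ) (hi : i < qDen ρ (n + 1)) (hzc : S.T i r z = c) :
    |S.T (qDen ρ n) (pNum ρ n) c₀ - c₀| ≤
      Kc S.K α B s * |S.T (qDen ρ (n + 1)) (pNum ρ (n + 1)) y - y| ∧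
    |S.T (qDen ρ (n + 1)) (pNum ρ (n + 1)) y - y| ≤ |S.T (qDen ρ n) (pNum ρ n) c₀ - c₀| := by
  rcases Nat.even_or_odd n with hn | hn
  · exact S.final_one hirr hmem hρ n (by rw [hσ, hn.neg_one_pow]) hα hB hs law c₀ y z k hk hy hz
      i r hi hzc
  · have ab : ∀ a b : ℝ, |-a - -b| = |a - b| := fun a b => by
      rw [← abs_neg]; congr 1; ring
    have := S.refl.final_one (c := -c) hirr hmem hρ n
      (by change -S.σ = _; rw [hσ, hn.neg_one_pow]) hα hB hs
      (by
        intro t ht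
        have := law (-t) (by rwa [abs_neg])
        simp only [refl, neg_neg, neg_add_rev]
        rw [ab, abs_neg, add_comm c] at *
        exact this) (-c₀) (-y) (-z) k hk (by simp [refl, hy])
      (by
        simp only [refl, neg_neg]
        rw [mem_uIcc] at *
        rcases hz with h | h
        · right; constructor <;> linarith [h.1, h.2]
        · left; constructor <;> linarith [h.1, h.2]) i r hi (by simp [refl, hzc])
    simp only [refl, neg_neg, ab] at this
    exact this

end Sys

theorem critical_atoms_are_large
    (f : MCM) (ρ : ℝ) (hirr : Irrational ρ) (hmem : ρ ∈ Set.Ioo (0 : ℝ) 1)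
    (hrot : HasRotationNumber f.F ρ) (i₀ : Fin f.N) :
    ∃ K : ℝ, 1 < K ∧ ∀ n k : ℕ, k < cfDigit ρ (n + 1) →
      (∃ x ∈ atomSet f.F ρ (f.c i₀) (n + 1) (qDen ρ n + k * qDen ρ (n + 1)),
        deriv (f.F^[qDen ρ (n + 1)]) x = 0) →
      K⁻¹ * atomLen f.F ρ (f.c i₀) n 0 ≤
          atomLen f.F ρ (f.c i₀) (n + 1) (qDen ρ n + k * qDen ρ (n + 1)) ∧
        atomLen f.F ρ (f.c i₀) (n + 1) (qDen ρ n + k * qDen ρ (n + 1)) ≤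
          K * atomLen f.F ρ (f.c i₀) n 0 := by
  obtain ⟨S, hρ, hσ, hT⟩ := f.exists_sys hirr hrot
  choose α B hα hB law using f.critLaw
  have hsum : 0 ≤ ∑ l, Sys.Kc S.K (α l) (B l) (f.s l) :=
    Finset.sum_nonneg fun l _ => Sys.Kc_nonneg _ _ _ _
  refine ⟨2 + ∑ l, Sys.Kc S.K (α l) (B l) (f.s l), by linarith, ?_⟩
  rintro n k hk ⟨x, hx, hd⟩
  obtain ⟨i, hi, hd⟩ := f.deriv_iter _ _ hd
  obtain ⟨l, m, hlm⟩ := f.critOnly _ hd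
  have T1 : ∀ x, S.T 1 0 x = f.F x := fun x => by simpa using hT 1 0 x
  set j := qDen ρ n + k * qDen ρ (n + 1) with hj
  set P : ℤ := (pNum ρ n + k * pNum ρ (n + 1) : ℤ) with hP
  have hTj : S.T (qDen ρ n + k * qDen ρ (n + 1) : ℤ) P (f.c i₀) = f.F^[j] (f.c i₀) - P := by
    rw [← hT, hj]; push_cast; rfl
  have hgy : S.T (qDen ρ (n + 1)) (pNum ρ (n + 1)) (f.F^[j] (f.c i₀) - P) =
      f.F^[j + qDen ρ (n + 1)] (f.c i₀) - pNum ρ (n + 1) - P := by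
    rw [← hTj, S.add]
    have e : (qDen ρ (n + 1) + (qDen ρ n + k * qDen ρ (n + 1)) : ℤ) =
      ((j + qDen ρ (n + 1) : ℕ) : ℤ) := by rw [hj]; push_cast; ring
    rw [e, hT]; push_cast; ring
  have main := S.final_two hirr hmem hρ n hσ (hα l) (hB l) (f.s_gt_one l)
    (c := f.c l) (by simpa only [T1] using law l) (f.c i₀) (f.F^[j] (f.c i₀) - P) (x - P) k hk
    hTj.symm (by
      rw [hgy]
      unfold atomSet at hx
      rw [mem_uIcc] at *
      rcases hx with h | h
      · left; constructor <;> linarith [h.1, h.2]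
      · right; constructor <;> linarith [h.1, h.2]) i (m - P) hi (by
      have e : x - P = x + ((-P : ℤ) : ℝ) := by push_cast; ring
      rw [e, S.per, hT, hlm]; push_cast; ring)
  rw [hgy, hT] at main
  have e1 : atomLen f.F ρ (f.c i₀) n 0 =
      |f.F^[qDen ρ n] (f.c i₀) - ((pNum ρ n : ℤ) : ℝ) - f.c i₀| := by
    unfold atomLen; simp
  have e2 : atomLen f.F ρ (f.c i₀) (n + 1) j =
      |f.F^[j + qDen ρ (n + 1)] (f.c i₀) - pNum ρ (n + 1) - P - (f.F^[j] (f.c i₀) - P)| := by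
    unfold atomLen; congr 1; ring
  rw [← e1, ← e2] at main
  have n1 : 0 ≤ atomLen f.F ρ (f.c i₀) n 0 := abs_nonneg _
  have n2 : 0 ≤ atomLen f.F ρ (f.c i₀) (n + 1) j := abs_nonneg _
  have hl : Sys.Kc S.K (α l) (B l) (f.s l) ≤ ∑ l, Sys.Kc S.K (α l) (B l) (f.s l) :=
    Finset.single_le_sum (f := fun l => Sys.Kc S.K (α l) (B l) (f.s l))
      (fun l _ => Sys.Kc_nonneg _ _ _ _) (Finset.mem_univ l)
  constructor
  · rw [inv_mul_le_iff₀ (by linarith)]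
    refine main.1.trans (mul_le_mul_of_nonneg_right (by linarith) n2)
  · nlinarith [main.2]
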